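/- Let p be a prime and n ≥ 1, and let M be an analytic submanifold of ℚ_p^n. If some point of M is not very well multiplicatively approximable, then the set of points of M that are not very well multiplicatively approximable has positive measure with respect to the smooth measure class on M. -/

import Mathlib

open MeasureTheory Metric
open scoped ENNReal NNReal

namespace PadicDioph

variable (p : ℕ) [Fact p.Prime]

noncomputable instance : MeasurableSpace ℚ_[p] := borel _
instance : BorelSpace ℚ_[p] := ⟨rfl⟩

/-- Membership in `ℤ[1/p]`, viewed inside `ℚ`. -/
def IsZInvP (q : ℚ) : Prop := ∃ (z : ℤ) (k : ℕ), q = (z : ℚ) / (p : ℚ) ^ k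

/-- Sup norm (max of archimedean absolute values) of a finite tuple of rationals. -/
noncomputable def supNormR {m : ℕ} (q : Fin m → ℚ) : ℝ := ⨆ i, |(q i : ℝ)|

/-- Sup of the `p`-adic absolute values of a finite tuple of rationals. -/
noncomputable def supNormP {m : ℕ} (q : Fin m → ℚ) : ℝ := ⨆ i, ‖((q i : ℚ_[p]))‖

/-- Sup norm of an integer tuple together with an extra integer coordinate. -/
noncomputable def supNormZ {n : ℕ} (q0 : ℤ) (q : Fin n → ℤ) : ℝ :=
  max |(q0 : ℝ)| (⨆ i, |((q i : ℤ) : ℝ)|)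

/-- The classical Diophantine exponent `w(y)` of `y ∈ ℚ_p^n`: the supremum of all `v > 0`
such that `|q₀ + q·y|_p ≤ ‖(q₀,q)‖_∞^{-v}` has infinitely many integer solutions. -/
noncomputable def wExp {n : ℕ} (y : Fin n → ℚ_[p]) : ℝ≥0∞ :=
  ⨆ (v : ℝ) (_ : 0 < v ∧
    {qq : ℤ × (Fin n → ℤ) |
      ‖((qq.1 : ℚ_[p]) + ∑ i, (qq.2 i : ℚ_[p]) * y i)‖ ≤
        (supNormZ qq.1 qq.2) ^ (-v)}.Infinite), ENNReal.ofReal v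

/-- `y` is very well approximable if `w(y) > n + 1`. -/
def IsVWA {n : ℕ} (y : Fin n → ℚ_[p]) : Prop :=
  ENNReal.ofReal ((n : ℝ) + 1) < wExp p y

/-- The defining condition of the exponent `w_p`: there are solutions
`q̃ = (q₀, q) ∈ ℤ[1/p]^{n+1}` of `|q·y + q₀|_p < (‖q‖_p ‖q̃‖_∞)^{-v} ‖q̃‖_∞^{-1}`
with `‖q‖_p ‖q̃‖_∞` arbitrarily large. -/
def WpCond {n : ℕ} (y : Fin n → ℚ_[p]) (v : ℝ) : Prop :=
  ∀ T : ℝ, ∃ (q0 : ℚ) (q : Fin n → ℚ),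
    IsZInvP p q0 ∧ (∀ i, IsZInvP p (q i)) ∧
    T < supNormP p q * supNormR (Fin.cons q0 q) ∧
    ‖(∑ i, (q i : ℚ_[p]) * y i) + (q0 : ℚ_[p])‖ <
      (supNormP p q * supNormR (Fin.cons q0 q)) ^ (-v) * (supNormR (Fin.cons q0 q))⁻¹

/-- The exponent `w_p(y)`. -/
noncomputable def wpExp {n : ℕ} (y : Fin n → ℚ_[p]) : ℝ≥0∞ :=
  ⨆ (v : ℝ) (_ : 0 < v ∧ WpCond p y v), ENNReal.ofReal v

/-- `Π_+` of a tuple of rationals: the product of `|q_i|_∞` over the nonzero coordinates. -/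
noncomputable def piPlusQ {m : ℕ} (q : Fin m → ℚ) : ℝ :=
  ∏ i, (if q i = 0 then 1 else |(q i : ℝ)|)

/-- `Π_+` of `(q₀, q)` with integer coordinates. -/
noncomputable def piPlusZ {n : ℕ} (q0 : ℤ) (q : Fin n → ℤ) : ℝ :=
  (if q0 = 0 then 1 else |(q0 : ℝ)|) * ∏ i, (if q i = 0 then 1 else |((q i : ℤ) : ℝ)|)

/-- `y ∈ ℚ_p^n` is very well multiplicatively approximable. -/
def IsVWMA {n : ℕ} (y : Fin n → ℚ_[p]) : Prop :=
  ∃ ε : ℝ, 0 < ε ∧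
    {qq : ℤ × (Fin n → ℤ) |
      ‖((qq.1 : ℚ_[p]) + ∑ i, (qq.2 i : ℚ_[p]) * y i)‖ ≤
        (piPlusZ qq.1 qq.2) ^ (-(1 + ε))}.Infinite

/-- A measure on `ℚ_p^n` is strongly extremal if almost every point is not VWMA. -/
def StronglyExtremal {n : ℕ} (μ : Measure (Fin n → ℚ_[p])) : Prop :=
  ∀ᵐ y ∂μ, ¬ IsVWMA p y

/-- `δ(g_t u_y D^{n+1})` for the one-parameter flow: `g_t` has `p`-adic component
`diag(p^{-t},1,…,1)` and archimedean component `p^{-t/(n+1)}·Id`. -/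
noncomputable def deltaOne {n : ℕ} (y : Fin n → ℚ_[p]) (t : ℕ) : ℝ :=
  sInf { c : ℝ | ∃ qt : Fin (n + 1) → ℚ, (∀ i, IsZInvP p (qt i)) ∧ qt ≠ 0 ∧
    c = ((p : ℝ) ^ (-(t : ℝ) / ((n : ℝ) + 1)) * supNormR qt) *
        max (‖(((p : ℚ_[p]) ^ t)⁻¹ * ((qt 0 : ℚ_[p]) + ∑ i : Fin n, (qt i.succ : ℚ_[p]) * y i))‖)
            (⨆ i : Fin n, ‖((qt i.succ : ℚ_[p]))‖) }

/-- The exponent `γ(y)`. -/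
noncomputable def gammaExp {n : ℕ} (y : Fin n → ℚ_[p]) : ℝ :=
  sSup {c : ℝ | 0 ≤ c ∧ ∀ N : ℕ, ∃ t : ℕ, N ≤ t ∧
    deltaOne p y t ≤ (p : ℝ) ^ (-(c * (t : ℝ)))}

/-- `δ(g_t u_y D^{n+1})` for the multiparameter flow: for `t = (t₀,…,t_n)` with
`T = Σ tᵢ`, the `p`-adic component of `g_t` is `diag(p^{-T},1,…,1)` and the archimedean
component is `diag(p^{-t₀},…,p^{-t_n})`. -/
noncomputable def deltaMulti {n : ℕ} (y : Fin n → ℚ_[p]) (t : Fin (n + 1) → ℕ) : ℝ :=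
  sInf { c : ℝ | ∃ qt : Fin (n + 1) → ℚ, (∀ i, IsZInvP p (qt i)) ∧ qt ≠ 0 ∧
    c = (⨆ i, (p : ℝ) ^ (-((t i : ℝ))) * |(qt i : ℝ)|) *
        max (‖(((p : ℚ_[p]) ^ (∑ i, t i))⁻¹ *
              ((qt 0 : ℚ_[p]) + ∑ i : Fin n, (qt i.succ : ℚ_[p]) * y i))‖)
            (⨆ i : Fin n, ‖((qt i.succ : ℚ_[p]))‖) }

/-- The support of a measure on a metric space. -/
def measSupp {X : Type*} [MetricSpace X] [MeasurableSpace X] (μ : Measure X) : Set X :=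
  {x | ∀ r : ℝ, 0 < r → 0 < μ (ball x r)}

/-- `‖f‖_{μ,B}`. -/
noncomputable def muSupNorm {X : Type*} [MetricSpace X] [MeasurableSpace X]
    (μ : Measure X) (B : Set X) (f : X → ℚ_[p]) : ℝ :=
  sSup {c : ℝ | 0 < μ {x ∈ B | c < ‖f x‖}}

/-- `f` is `(C, α)`-good on `V` with respect to `μ`. -/
def IsGoodOn {X : Type*} [MetricSpace X] [MeasurableSpace X] (μ : Measure X)
    (C a : ℝ) (V : Set X) (f : X → ℚ_[p]) : Prop :=
  ∀ (x₀ : X) (r : ℝ), 0 < r → x₀ ∈ measSupp μ → ball x₀ r ⊆ V →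
    ∀ ε : ℝ, 0 < ε →
      μ {x ∈ ball x₀ r | ‖f x‖ < ε} ≤
        ENNReal.ofReal (C * (ε / muSupNorm p μ (ball x₀ r) f) ^ a) * μ (ball x₀ r)

/-- A metric space is Besicovitch: any family of balls whose centers exhaust a bounded
set `A` admits a countable subfamily covering `A` with multiplicity at most `N`. -/
def IsBesicovitch (X : Type*) [MetricSpace X] : Prop :=
  ∃ N : ℕ, ∀ (A : Set X), Bornology.IsBounded A →
    ∀ F : Set (X × ℝ), (∀ b ∈ F, 0 < b.2) → (∀ x ∈ A, ∃ r : ℝ, (x, r) ∈ F) →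
      ∃ S ⊆ F, S.Countable ∧ (∀ x ∈ A, ∃ b ∈ S, x ∈ ball b.1 b.2) ∧
        ∀ x : X, {b ∈ S | x ∈ ball b.1 b.2}.encard ≤ N

/-- `μ` is `D`-Federer on the open set `U`. -/
def IsDFedererOn {X : Type*} [MetricSpace X] [MeasurableSpace X]
    (μ : Measure X) (D : ℝ) (U : Set X) : Prop :=
  ∀ x ∈ measSupp μ, ∀ r : ℝ, 0 < r → ball x (3 * r) ⊆ U →
    μ (ball x (3 * r)) ≤ ENNReal.ofReal D * μ (ball x r)

/-- `μ` is Federer. -/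
def IsFederer {X : Type*} [MetricSpace X] [MeasurableSpace X] (μ : Measure X) : Prop :=
  ∀ᵐ x ∂μ, ∃ U : Set X, IsOpen U ∧ x ∈ U ∧ 0 < μ U ∧ ∃ D : ℝ, 0 < D ∧ IsDFedererOn μ D U

/-- The pair `(f, μ)` is good: `μ`-a.e. point has a neighbourhood `V` and `C, α > 0`
such that every affine combination `c₀ + Σ cᵢ fᵢ` is `(C, α)`-good on `V` w.r.t. `μ`. -/
def GoodPair {X : Type*} [MetricSpace X] [MeasurableSpace X] {n : ℕ}
    (f : X → (Fin n → ℚ_[p])) (μ : Measure X) : Prop :=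
  ∀ᵐ x ∂μ, ∃ V : Set X, IsOpen V ∧ x ∈ V ∧ ∃ C a : ℝ, 0 < C ∧ 0 < a ∧
    ∀ c0 : ℚ_[p], ∀ c : Fin n → ℚ_[p],
      IsGoodOn p μ C a V (fun x => c0 + ∑ i, c i * f x i)

/-- `(f, μ)` is nonplanar in the affine subspace `L`. -/
def NonplanarIn {X : Type*} [MetricSpace X] [MeasurableSpace X] {n : ℕ}
    (f : X → (Fin n → ℚ_[p])) (μ : Measure X)
    (L : AffineSubspace ℚ_[p] (Fin n → ℚ_[p])) : Prop :=
  ∀ B : Set X, IsOpen B → B.Nonempty → 0 < μ B →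
    affineSpan ℚ_[p] (f '' (B ∩ measSupp μ)) = L

/-- `f` is nondegenerate in the affine subspace `L` at `x`: `f` takes values in `L` and the
span of the partial derivatives of `f` at `x` up to some order is the linear part of `L`. -/
def NondegenerateAt {d n : ℕ} (f : (Fin d → ℚ_[p]) → (Fin n → ℚ_[p]))
    (L : AffineSubspace ℚ_[p] (Fin n → ℚ_[p])) (x : Fin d → ℚ_[p]) : Prop :=
  (∀ u, f u ∈ L) ∧ ∃ m : ℕ,
    Submodule.span ℚ_[p]
      {v : Fin n → ℚ_[p] | ∃ j : ℕ, j ≤ m ∧ 1 ≤ j ∧ ∃ vs : Fin j → (Fin d → ℚ_[p]),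
        v = iteratedFDeriv ℚ_[p] j f x vs} = L.direction

/-- An analytic chart of the `d`-dimensional submanifold `M` of `ℚ_p^n`: an analytic map
`f` on an open set `U`, injective on `U`, immersive, a homeomorphism onto its image, whose
image is a relatively open subset of `M`. -/
def IsChart (d n : ℕ) (M : Set (Fin n → ℚ_[p]))
    (U : Set (Fin d → ℚ_[p])) (f : (Fin d → ℚ_[p]) → (Fin n → ℚ_[p])) : Prop :=
  IsOpen U ∧ AnalyticOnNhd ℚ_[p] f U ∧ Set.InjOn f U ∧
  (∀ x ∈ U, Function.Injective (fderiv ℚ_[p] f x)) ∧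
  (∀ x ∈ U, ∀ V : Set (Fin d → ℚ_[p]), IsOpen V → x ∈ V →
      ∃ W : Set (Fin n → ℚ_[p]), IsOpen W ∧ f x ∈ W ∧ W ∩ f '' U ⊆ f '' (V ∩ U)) ∧
  ∃ W : Set (Fin n → ℚ_[p]), IsOpen W ∧ M ∩ W = f '' U

/-- `M` is a `d`-dimensional analytic submanifold of `ℚ_p^n`. -/
def IsAnalyticSubmanifold (d n : ℕ) (M : Set (Fin n → ℚ_[p])) : Prop :=
  M.Nonempty ∧ ∀ y ∈ M, ∃ (U : Set (Fin d → ℚ_[p])) (f : (Fin d → ℚ_[p]) → (Fin n → ℚ_[p])),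
    IsChart p d n M U f ∧ y ∈ f '' U


set_option linter.unusedSectionVars false

open Polynomial in
open Classical in
theorem dd_monomial_int {ι : Type} (s : Finset ι) (v : ι → ℤ_[p]) (hv : Set.InjOn v s) (n : ℕ) :
    ‖∑ i ∈ s, ((v i : ℚ_[p])) ^ n / ∏ j ∈ s.erase i, ((v i : ℚ_[p]) - v j)‖ ≤ 1 := by
  set Q : ℤ_[p][X] := ∏ i ∈ s, (X - C (v i)) with hQ
  have hQm : Q.Monic := monic_prod_of_monic _ _ fun i _ => monic_X_sub_C _
  have hQd : Q.degree = s.card := by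
    rw [hQ, degree_prod_of_monic _ _ fun i _ => monic_X_sub_C _]
    simp
  set R : ℤ_[p][X] := X ^ n %ₘ Q with hR
  have hRd : R.degree < s.card := by
    rw [← hQd]; exact degree_modByMonic_lt _ hQm
  have hv' : Set.InjOn (fun i => (v i : ℚ_[p])) s := fun a ha b hb h => hv ha hb (Subtype.ext h)
  have hev : ∀ i ∈ s, (R.map (PadicInt.Coe.ringHom (p := p))).eval ((v i : ℚ_[p])) = (v i : ℚ_[p]) ^ n := by
    intro i hi
    have h1 : R.eval (v i) = (v i) ^ n := by
      have h2 := modByMonic_add_div (X ^ n) Q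
      have h3 : Q.eval (v i) = 0 := by
        rw [hQ, eval_prod]; exact Finset.prod_eq_zero hi (by simp)
      have h4 := congrArg (Polynomial.eval (v i)) h2
      simpa [h3] using h4
    have := Polynomial.eval_map_apply (f := PadicInt.Coe.ringHom (p := p)) (p := R) (v i)
    have e : (PadicInt.Coe.ringHom (p := p)) (v i) = (v i : ℚ_[p]) := rfl
    rw [e] at this
    rw [this, h1, map_pow, e]
  have key := Lagrange.coeff_eq_sum (F := ℚ_[p]) hv' (P := R.map (PadicInt.Coe.ringHom (p := p)))
    (lt_of_le_of_lt degree_map_le hRd)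
  rw [Finset.sum_congr rfl (fun i hi => by rw [hev i hi])] at key
  rw [← key, coeff_map]
  exact PadicInt.norm_le_one _

open Polynomial in
open Classical in
theorem dd_norm (s : Finset ℚ_[p]) (N : ℕ) (hs : s.card = N + 1) (h1 : ∀ x ∈ s, ‖x‖ ≤ 1)
    (c : ℕ → ℚ_[p]) (g : ℚ_[p] → ℚ_[p])
    (hg : ∀ x ∈ s, Filter.Tendsto (fun M => ∑ n ∈ Finset.range M, c n * x ^ n) Filter.atTop (nhds (g x)))
    (hc : ∀ n, N < n → ‖c n‖ < ‖c N‖) :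
    ‖∑ x ∈ s, g x / ∏ y ∈ s.erase x, (x - y)‖ = ‖c N‖ := by
  set D : ℕ → ℚ_[p] := fun n => ∑ x ∈ s, x ^ n / ∏ y ∈ s.erase x, (x - y) with hD
  have hDlow : ∀ n, n ≤ N → D n = if n = N then 1 else 0 := by
    intro n hn
    have := Lagrange.coeff_eq_sum (F := ℚ_[p]) (s := s) (v := id) (Set.injOn_id _) (P := X ^ n)
      (by rw [degree_X_pow, hs]; exact_mod_cast Nat.lt_succ_of_le hn)
    simp only [hs, id, eval_pow, eval_X, coeff_X_pow] at this
    rw [hD]; simp only [← this]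
    simp [eq_comm]
  have hDn : ∀ n, ‖D n‖ ≤ 1 := by
    intro n
    let v : ℚ_[p] → ℤ_[p] := fun x => if h : ‖x‖ ≤ 1 then ⟨x, h⟩ else 0
    have hv : ∀ x ∈ s, (v x : ℚ_[p]) = x := fun x hx => by simp [v, h1 x hx]
    have := dd_monomial_int p s v (fun a ha b hb h => by
      rw [← hv a ha, ← hv b hb, h]) n
    rw [Finset.sum_congr rfl (fun i hi => by
      rw [hv i hi, Finset.prod_congr rfl (fun j hj => by rw [hv j (Finset.mem_of_mem_erase hj)])])] at this
    exact this
  have hlim : Filter.Tendsto (fun M => ∑ n ∈ Finset.range M, c n * D n) Filter.atTop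
      (nhds (∑ x ∈ s, g x / ∏ y ∈ s.erase x, (x - y))) := by
    have : (fun M => ∑ n ∈ Finset.range M, c n * D n) =
        fun M => ∑ x ∈ s, (∑ n ∈ Finset.range M, c n * x ^ n) / ∏ y ∈ s.erase x, (x - y) := by
      funext M
      simp only [hD, Finset.mul_sum, Finset.sum_div]
      rw [Finset.sum_comm]
      refine Finset.sum_congr rfl fun x _ => Finset.sum_congr rfl fun n _ => by ring
    rw [this]
    exact tendsto_finsetSum _ fun x hx => (hg x hx).div_const _
  have hev : ∀ M, N + 1 ≤ M → ‖∑ n ∈ Finset.range M, c n * D n‖ = ‖c N‖ := by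
    intro M hM
    induction M, hM using Nat.le_induction with
    | base =>
      rw [Finset.sum_range_succ, Finset.sum_eq_zero, hDlow N le_rfl]
      · simp
      · intro n hn
        rw [Finset.mem_range] at hn
        rw [hDlow n hn.le, if_neg hn.ne, mul_zero]
    | succ M hM ih =>
      rw [Finset.sum_range_succ, ← ih]
      have : ‖c M * D M‖ < ‖∑ n ∈ Finset.range M, c n * D n‖ := by
        rw [ih, norm_mul]
        calc _ ≤ ‖c M‖ * 1 := by gcongr; exact hDn M
          _ < _ := by rw [mul_one]; exact hc M hM
      rw [IsUltrametricDist.norm_add_eq_max_of_norm_ne_norm this.ne']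
      exact max_eq_left this.le
  refine tendsto_nhds_unique hlim.norm (tendsto_const_nhds.congr' ?_)
  filter_upwards [Filter.eventually_ge_atTop (N+1)] with M hM
  exact (hev M hM).symm


open Classical in
theorem exists_sep (μ : Measure ℚ_[p]) (s : ℝ) (hs : 0 < s)
    (hμ : ∀ z, μ (closedBall z s) ≤ ENNReal.ofReal s) (E : Set ℚ_[p]) (k : ℕ)
    (h : ENNReal.ofReal (k * s) < μ E) :
    ∃ t : Finset ℚ_[p], (∀ x ∈ t, x ∈ E) ∧ t.card = k + 1 ∧
      ∀ x ∈ t, ∀ y ∈ t, x ≠ y → s < ‖x - y‖ := by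
  induction k with
  | zero =>
    have : E.Nonempty := by
      by_contra hE
      rw [Set.not_nonempty_iff_eq_empty] at hE
      simp [hE] at h
    obtain ⟨x, hx⟩ := this
    refine ⟨{x}, by simpa using hx, by simp, ?_⟩
    intro a ha b hb hab
    simp at ha hb
    exact absurd (ha.trans hb.symm) hab
  | succ k ih =>
    obtain ⟨t, htE, htc, hts⟩ := ih (lt_of_le_of_lt (ENNReal.ofReal_le_ofReal (by
      push_cast; nlinarith)) h)
    have hex : ∃ z ∈ E, ∀ x ∈ t, s < ‖z - x‖ := by
      by_contra hcon
      push Not at hcon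
      have hsub : E ⊆ ⋃ x ∈ t, closedBall x s := by
        intro z hz
        obtain ⟨x, hx, hzx⟩ := hcon z hz
        simp only [Set.mem_iUnion]
        exact ⟨x, hx, by rwa [mem_closedBall, dist_eq_norm]⟩
      have : μ E ≤ ENNReal.ofReal ((k + 1 : ℕ) * s) := by
        calc μ E ≤ μ (⋃ x ∈ t, closedBall x s) := measure_mono hsub
          _ ≤ ∑ x ∈ t, μ (closedBall x s) := measure_biUnion_finset_le _ _
          _ ≤ ∑ x ∈ t, ENNReal.ofReal s := Finset.sum_le_sum fun x _ => hμ x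
          _ = _ := by
            rw [Finset.sum_const, htc, nsmul_eq_mul, ENNReal.ofReal_mul (by positivity),
              ENNReal.ofReal_natCast]
      exact absurd h (not_lt.mpr this)
    obtain ⟨z, hzE, hz⟩ := hex
    have hzt : z ∉ t := fun hzt => by
      have := hz z hzt
      simp at this; linarith
    refine ⟨insert z t, ?_, by rw [Finset.card_insert_of_notMem hzt, htc], ?_⟩
    · intro x hx
      rcases Finset.mem_insert.mp hx with rfl | hx
      · exact hzE
      · exact htE x hx
    · intro x hx y hy hxy
      rcases Finset.mem_insert.mp hx with rfl | hx' <;> rcases Finset.mem_insert.mp hy with rfl | hy'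
      · exact absurd rfl hxy
      · exact hz y hy'
      · rw [norm_sub_rev]; exact hz x hx'
      · exact hts x hx' y hy' hxy

open Classical in
theorem good_points (N : ℕ) (c : ℕ → ℚ_[p]) (g : ℚ_[p] → ℚ_[p])
    (hg : ∀ x, ‖x‖ ≤ 1 → Filter.Tendsto (fun M => ∑ n ∈ Finset.range M, c n * x ^ n) Filter.atTop (nhds (g x)))
    (hc : ∀ n, N < n → ‖c n‖ < ‖c N‖) (t : Finset ℚ_[p]) (htc : t.card = N + 1)
    (z : ℚ_[p]) (s r ε : ℝ) (hs : 0 < s) (hε : 0 < ε) (hr : 0 < r)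
    (h1 : ∀ x ∈ insert z t, ‖x‖ ≤ 1)
    (hsr : ∀ x ∈ insert z t, ∀ y ∈ insert z t, ‖x - y‖ ≤ r)
    (hsep : ∀ x ∈ t, ∀ y ∈ t, x ≠ y → s < ‖x - y‖)
    (hgt : ∀ x ∈ t, ‖g x‖ < ε) (hgz : ε ≤ ‖g z‖) :
    ‖g z‖ * s ^ N ≤ ε * r ^ N := by
  have hzt : z ∉ t := fun h => absurd (hgt z h) (not_lt.mpr hgz)
  have hA : ‖c N‖ * s ^ N ≤ ε := by
    rw [← dd_norm p t N htc (fun x hx => h1 x (Finset.mem_insert_of_mem hx)) c g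
      (fun x hx => hg x (h1 x (Finset.mem_insert_of_mem hx))) hc, ← le_div_iff₀ (by positivity)]
    refine IsUltrametricDist.norm_sum_le_of_forall_le_of_nonneg (by positivity) fun x hx => ?_
    rw [norm_div]
    refine div_le_div₀ hε.le (hgt x hx).le (by positivity) ?_
    rw [norm_prod]
    calc s ^ N = ∏ y ∈ t.erase x, s := by
          rw [Finset.prod_const, Finset.card_erase_of_mem hx, htc]; simp
      _ ≤ _ := Finset.prod_le_prod (fun _ _ => hs.le) fun y hy =>
          (hsep x hx y (Finset.mem_of_mem_erase hy) (Finset.ne_of_mem_erase hy).symm).le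
  obtain ⟨x0, hx0⟩ : t.Nonempty := Finset.card_pos.mp (by omega)
  set t' := t.erase x0 with ht'
  have ht'c : t'.card = N := by rw [ht', Finset.card_erase_of_mem hx0, htc]; simp
  have ht't : ∀ x ∈ t', x ∈ t := fun x hx => Finset.mem_of_mem_erase hx
  have hzt' : z ∉ t' := fun h => hzt (ht't _ h)
  have hu := dd_norm p (insert z t') N (by rw [Finset.card_insert_of_notMem hzt', ht'c])
    (fun x hx => h1 x (by
      rcases Finset.mem_insert.mp hx with rfl | hx
      · exact Finset.mem_insert_self _ _
      · exact Finset.mem_insert_of_mem (ht't _ hx))) c g (fun x hx => hg x (h1 x (by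
      rcases Finset.mem_insert.mp hx with rfl | hx
      · exact Finset.mem_insert_self _ _
      · exact Finset.mem_insert_of_mem (ht't _ hx)))) hc
  rw [Finset.sum_insert hzt', Finset.erase_insert hzt'] at hu
  set P := ∏ y ∈ t', (z - y) with hP
  have hPr : ‖P‖ ≤ r ^ N := by
    rw [hP, norm_prod]
    calc _ ≤ ∏ y ∈ t', r := Finset.prod_le_prod (fun _ _ => norm_nonneg _) fun y hy =>
          hsr z (Finset.mem_insert_self _ _) y (Finset.mem_insert_of_mem (ht't y hy))
      _ = r ^ N := by rw [Finset.prod_const, ht'c]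
  have hP0 : P ≠ 0 := by
    rw [hP, Finset.prod_ne_zero_iff]
    intro y hy h
    exact hzt' (by rw [sub_eq_zero.mp h]; exact hy)
  set S := ∑ x ∈ t', g x / ∏ y ∈ (insert z t').erase x, (x - y) with hS
  have hPS : ‖P * S‖ ≤ ε * (r / s) ^ N := by
    rw [hS, Finset.mul_sum]
    refine IsUltrametricDist.norm_sum_le_of_forall_le_of_nonneg (by positivity) fun x hx => ?_
    have hzx : z ≠ x := fun h => hzt' (h ▸ hx)
    rw [Finset.erase_insert_of_ne hzx, Finset.prod_insert (fun h => hzt' (Finset.mem_of_mem_erase h)),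
      hP, ← Finset.mul_prod_erase t' _ hx]
    have hzx0 : z - x ≠ 0 := sub_ne_zero.mpr hzx
    have e : (z - x) * (∏ y ∈ t'.erase x, (z - y)) * (g x / ((x - z) * ∏ y ∈ t'.erase x, (x - y)))
        = - (g x * ∏ y ∈ t'.erase x, ((z - y) / (x - y))) := by
      rw [Finset.prod_div_distrib]
      have : x - z = -(z - x) := by ring
      rw [this]
      by_cases h0 : ∏ y ∈ t'.erase x, (x - y) = 0
      · simp [h0]
      · field_simp
    rw [e, norm_neg, norm_mul, norm_prod]
    have hsr' : s ≤ r := (hsep x (ht't x hx) x0 hx0 (Finset.ne_of_mem_erase hx)).le.trans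
      (hsr x (Finset.mem_insert_of_mem (ht't x hx)) x0 (Finset.mem_insert_of_mem hx0))
    have h1rs : 1 ≤ r / s := (one_le_div hs).mpr hsr'
    refine mul_le_mul (hgt x (ht't x hx)).le ?_ (by positivity) hε.le
    calc _ ≤ ∏ y ∈ t'.erase x, (r / s) := Finset.prod_le_prod (fun _ _ => norm_nonneg _) fun y hy => by
          rw [norm_div]
          exact div_le_div₀ hr.le (hsr _ (Finset.mem_insert_self _ _) _
            (Finset.mem_insert_of_mem (ht't y (Finset.mem_of_mem_erase hy)))) hs
            (hsep x (ht't x hx) y (ht't y (Finset.mem_of_mem_erase hy)) (Finset.ne_of_mem_erase hy).symm).le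
      _ = (r / s) ^ (N - 1) := by rw [Finset.prod_const, Finset.card_erase_of_mem hx, ht'c]
      _ ≤ (r / s) ^ N := pow_le_pow_right₀ h1rs (by omega)
  have hfin : g z = P * (g z / P + S) - P * S := by field_simp; ring
  rw [hfin]
  have hb : ‖P * (g z / P + S) - P * S‖ ≤ ε * (r / s) ^ N := by
    rw [sub_eq_add_neg]
    refine (IsUltrametricDist.norm_add_le_max _ _).trans (max_le ?_ (by rw [norm_neg]; exact hPS))
    rw [norm_mul, hu]
    calc ‖P‖ * ‖c N‖ ≤ r ^ N * (ε / s ^ N) := by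
          gcongr
          rwa [le_div_iff₀ (by positivity)]
      _ = _ := by rw [div_pow]; ring
  calc _ ≤ ε * (r / s) ^ N * s ^ N := by gcongr
    _ = _ := by rw [div_pow]; field_simp


theorem p_pos' : (0 : ℝ) < p := by exact_mod_cast (Fact.out : p.Prime).pos
theorem one_lt_p' : (1 : ℝ) < p := by exact_mod_cast (Fact.out : p.Prime).one_lt

/-- Radii of balls. -/
noncomputable def rr (k : ℕ) : ℝ := ((p : ℝ)⁻¹) ^ k

theorem rr_eq (k : ℕ) : rr p k = (p : ℝ) ^ (-(k : ℤ)) := by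
  rw [rr, zpow_neg, zpow_natCast, inv_pow]

theorem rr_pos (k : ℕ) : 0 < rr p k := by
  have := p_pos' p
  unfold rr; positivity

theorem rr_le_one (k : ℕ) : rr p k ≤ 1 :=
  pow_le_one₀ (inv_nonneg.mpr (p_pos' p).le) (inv_le_one_of_one_le₀ (one_lt_p' p).le)

theorem rr_succ (k : ℕ) : rr p k = p * rr p (k + 1) := by
  have := p_pos' p
  rw [rr, rr, pow_succ]; field_simp

/-- Normalized Haar measure. -/
noncomputable def lam : Measure ℚ_[p] :=
  Measure.addHaarMeasure ⟨⟨closedBall 0 1, isCompact_closedBall _ _⟩, by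
    refine ⟨0, ?_⟩
    rw [mem_interior_iff_mem_nhds]
    exact closedBall_mem_nhds _ one_pos⟩

instance : (lam p).IsAddHaarMeasure := by unfold lam; infer_instance

theorem lam_unit : lam p (closedBall 0 1) = 1 := by
  unfold lam
  exact Measure.addHaarMeasure_self

theorem lam_translate (z : ℚ_[p]) (s : ℝ) : lam p (closedBall z s) = lam p (closedBall 0 s) := by
  have : (fun x => z + x) ⁻¹' closedBall z s = closedBall 0 s := by
    ext x; simp [dist_eq_norm]
  rw [← this, measure_preimage_add]

theorem lam_ball (z : ℚ_[p]) (k : ℕ) : lam p (closedBall z (rr p k)) = ENNReal.ofReal (rr p k) := by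
  have hun : closedBall (0 : ℚ_[p]) 1 = ⋃ i ∈ Finset.range (p ^ k), closedBall (i : ℚ_[p]) (rr p k) := by
    ext x
    simp only [Set.mem_iUnion, mem_closedBall, dist_eq_norm, sub_zero]
    constructor
    · intro hx
      obtain ⟨X, hX⟩ : ∃ X : ℤ_[p], (X : ℚ_[p]) = x := ⟨⟨x, hx⟩, rfl⟩
      refine ⟨PadicInt.appr X k, Finset.mem_range.mpr (PadicInt.appr_lt _ _), ?_⟩
      have := PadicInt.appr_spec k X
      rw [← PadicInt.norm_le_pow_iff_mem_span_pow, PadicInt.norm_def, PadicInt.coe_sub, PadicInt.coe_natCast, hX] at this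
      rw [rr_eq]
      exact this
    · rintro ⟨i, hi, h⟩
      have e : x = (x - i) + (i : ℚ_[p]) := by ring
      rw [e]
      refine (IsUltrametricDist.norm_add_le_max _ _).trans (max_le (h.trans (rr_le_one p k)) ?_)
      exact_mod_cast Padic.norm_int_le_one (p := p) i
  have hdis : Set.PairwiseDisjoint (↑(Finset.range (p ^ k)) : Set ℕ) fun i : ℕ => closedBall (i : ℚ_[p]) (rr p k) := by
    intro i hi j hj hij
    rw [Function.onFun, Set.disjoint_left]
    intro x hx hy
    rw [mem_closedBall, dist_eq_norm] at hx hy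
    have h : ‖((i - j : ℤ) : ℚ_[p])‖ ≤ (p : ℝ) ^ (-(k : ℤ)) := by
      rw [← rr_eq]
      have e : ((i - j : ℤ) : ℚ_[p]) = (x - j) + -(x - i) := by push_cast; ring
      rw [e]
      refine (IsUltrametricDist.norm_add_le_max _ _).trans (max_le hy (by rwa [norm_neg]))
    rw [Padic.norm_int_le_pow_iff_dvd] at h
    simp only [Finset.coe_range, Set.mem_Iio] at hi hj
    apply hij
    have hi' : (i : ℤ) < (p ^ k : ℕ) := by exact_mod_cast hi
    have hj' : (j : ℤ) < (p ^ k : ℕ) := by exact_mod_cast hj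
    have := Int.eq_zero_of_abs_lt_dvd h (by push_cast at *; rw [abs_lt]; constructor <;> linarith)
    omega
  have := lam_unit p
  rw [hun, measure_biUnion_finset hdis (fun i _ => measurableSet_closedBall)] at this
  simp only [lam_translate p _ (rr p k)] at this
  rw [Finset.sum_const, Finset.card_range, nsmul_eq_mul] at this
  rw [lam_translate]
  have hp := p_pos' p
  rw [mul_comm] at this
  rw [ENNReal.eq_inv_of_mul_eq_one_left this, rr, inv_pow, ENNReal.ofReal_inv_of_pos (by positivity)]
  congr 1
  rw [← ENNReal.ofReal_natCast]; push_cast; rfl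

theorem lam_closedBall_le (z : ℚ_[p]) (s : ℝ) (h0 : 0 < s) (h1 : s ≤ 1) :
    lam p (closedBall z s) ≤ ENNReal.ofReal s := by
  obtain ⟨n, hn1, hn2⟩ := exists_nat_pow_near_of_lt_one h0 h1 (inv_pos.mpr (p_pos' p))
    (inv_lt_one_of_one_lt₀ (one_lt_p' p))
  rcases hn2.eq_or_lt with h | h
  · rw [h]; exact (lam_ball p z n).le
  · have hsub : closedBall z s ⊆ closedBall z (rr p (n + 1)) := by
      intro x hx
      rw [mem_closedBall, dist_eq_norm] at *
      rw [rr_eq, Padic.norm_le_pow_iff_norm_lt_pow_add_one]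
      refine lt_of_le_of_lt hx (h.trans_eq ?_)
      have := rr_eq p n
      rw [rr] at this
      rw [this]; congr 1; push_cast; ring
    calc _ ≤ _ := measure_mono hsub
      _ = _ := lam_ball p z (n + 1)
      _ ≤ _ := ENNReal.ofReal_le_ofReal hn1.le

theorem good_measure (Nm N : ℕ) (hNm : 1 ≤ Nm) (hN : N ≤ Nm) (c : ℕ → ℚ_[p]) (g : ℚ_[p] → ℚ_[p])
    (hg : ∀ x, ‖x‖ ≤ 1 → Filter.Tendsto (fun M => ∑ n ∈ Finset.range M, c n * x ^ n) Filter.atTop (nhds (g x)))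
    (hc : ∀ n, N < n → ‖c n‖ < ‖c N‖) (a : ℚ_[p]) (ha : ‖a‖ ≤ 1) (k : ℕ) (ε ρ : ℝ) (hε : 0 < ε)
    (hερ : ε ≤ ρ) (z : ℚ_[p]) (hz : z ∈ closedBall a (rr p k)) (hρz : ρ ≤ ‖g z‖) :
    lam p {x ∈ closedBall a (rr p k) | ‖g x‖ < ε} ≤
      ENNReal.ofReal ((Nm + 1) * (ε / ρ) ^ ((1 : ℝ) / Nm)) * lam p (closedBall a (rr p k)) := by
  classical
  set B := closedBall a (rr p k) with hB
  set E := {x ∈ B | ‖g x‖ < ε} with hE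
  have hr := rr_pos p k
  have hEB : lam p E ≤ ENNReal.ofReal (rr p k) := by
    rw [← lam_ball p a k]; exact measure_mono fun x hx => hx.1
  have hEfin : lam p E ≠ ⊤ := ne_top_of_le_ne_top ENNReal.ofReal_ne_top hEB
  set m := (lam p E).toReal with hm
  have hmE : lam p E = ENNReal.ofReal m := (ENNReal.ofReal_toReal hEfin).symm
  have hmr : m ≤ rr p k := by
    rw [hmE] at hEB
    exact (ENNReal.ofReal_le_ofReal_iff hr.le).mp hEB
  have hρ : 0 < ρ := hε.trans_le hερ
  rw [hmE, lam_ball, ← ENNReal.ofReal_mul (by positivity)]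
  apply ENNReal.ofReal_le_ofReal
  have hm00 : 0 ≤ m := ENNReal.toReal_nonneg
  rcases hm00.eq_or_lt with h0 | hm0
  · rw [← h0]; positivity
  have hN0 : (0 : ℝ) < N + 1 := by positivity
  set s := m / (N + 1) with hs
  have hs0 : 0 < s := by positivity
  have hsm : s ≤ m := div_le_self hm0.le (by linarith [(Nat.cast_nonneg N : (0:ℝ) ≤ N)])
  obtain ⟨t, htE, htc, hts⟩ := exists_sep p (lam p) s hs0
    (fun z => lam_closedBall_le p z s hs0 (hsm.trans (hmr.trans (rr_le_one p k)))) E N (by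
      rw [hmE, ENNReal.ofReal_lt_ofReal_iff hm0, hs]
      rw [mul_div_assoc', div_lt_iff₀ hN0]; nlinarith)
  have hins : ∀ x ∈ insert z t, x ∈ B := by
    intro x hx
    rcases Finset.mem_insert.mp hx with rfl | hx
    · exact hz
    · exact (htE x hx).1
  have key := good_points p N c g hg hc t htc z s (rr p k) ε hs0 hε hr
    (fun x hx => by
      have h := hins x hx
      rw [hB, mem_closedBall, dist_eq_norm] at h
      have e : x = (x - a) + a := by ring
      rw [e]
      exact (IsUltrametricDist.norm_add_le_max _ _).trans (max_le (h.trans (rr_le_one p k)) ha))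
    (fun x hx y hy => by
      have h := hins x hx
      have h' := hins y hy
      rw [hB, mem_closedBall, dist_eq_norm] at h h'
      have e : x - y = (x - a) + -(y - a) := by ring
      rw [e]
      exact (IsUltrametricDist.norm_add_le_max _ _).trans (max_le h (by rwa [norm_neg])))
    hts (fun x hx => (htE x hx).2) (hερ.trans hρz)
  have h1 : (s / rr p k) ^ N ≤ ε / ρ := by
    rw [div_pow, div_le_div_iff₀ (by positivity) hρ]
    calc _ ≤ s ^ N * ‖g z‖ := by gcongr
      _ ≤ _ := by linarith
  set x := m / ((Nm + 1) * rr p k) with hx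
  have hx0 : 0 ≤ x := by positivity
  have hNm' : (N : ℝ) ≤ Nm := by exact_mod_cast hN
  have hxs : x ≤ s / rr p k := by
    rw [hx, hs, div_div]
    gcongr
  have hx1 : x ≤ 1 := by
    refine hxs.trans ?_
    rw [div_le_one hr]; exact hsm.trans hmr
  have h2 : x ^ Nm ≤ ε / ρ :=
    (pow_le_pow_of_le_one hx0 hx1 hN).trans ((pow_le_pow_left₀ hx0 hxs N).trans h1)
  have h3 : x ≤ (ε / ρ) ^ ((1 : ℝ) / Nm) := by
    calc x = (x ^ Nm) ^ ((1 : ℝ) / Nm) := by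
          rw [one_div, Real.pow_rpow_inv_natCast hx0 (by omega)]
      _ ≤ _ := Real.rpow_le_rpow (by positivity) h2 (by positivity)
  calc m = (Nm + 1) * x * rr p k := by rw [hx]; field_simp
    _ ≤ _ := by gcongr

theorem bounded_degree {m : ℕ} (c : ℕ → Fin m → ℚ_[p])
    (hc : Filter.Tendsto c Filter.atTop (nhds 0)) :
    ∃ Nm : ℕ, 1 ≤ Nm ∧ ∀ l : Fin m → ℚ_[p], (∀ n, ∑ i, l i * c n i = 0) ∨
      ∃ N ≤ Nm, ∀ n, N < n → ‖∑ i, l i * c n i‖ < ‖∑ i, l i * c N i‖ := by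
  let φ : ℕ → (Fin m → ℚ_[p]) →ₗ[ℚ_[p]] ℚ_[p] := fun n =>
    ∑ i, (c n i) • LinearMap.proj i
  have hφ : ∀ n l, φ n l = ∑ i, l i * c n i := fun n l => by
    simp [φ, LinearMap.sum_apply, mul_comm]
  have hφn : ∀ n l, ‖φ n l‖ ≤ ‖c n‖ * ‖l‖ := fun n l => by
    rw [hφ]
    refine IsUltrametricDist.norm_sum_le_of_forall_le_of_nonneg (by positivity) fun i _ => ?_
    rw [norm_mul, mul_comm]
    exact mul_le_mul (norm_le_pi_norm _ i) (norm_le_pi_norm _ i) (norm_nonneg _) (norm_nonneg _)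
  let K : ℕ →o (Submodule ℚ_[p] (Fin m → ℚ_[p]))ᵒᵈ :=
    ⟨fun M => OrderDual.toDual (⨅ n : Fin M, LinearMap.ker (φ n)), fun a b hab => by
      rw [OrderDual.toDual_le_toDual]
      exact le_iInf fun n => iInf_le (fun n : Fin b => LinearMap.ker (φ n)) ⟨n, n.2.trans_le hab⟩⟩
  obtain ⟨M0, hM0⟩ := IsArtinian.monotone_stabilizes K
  let L : (Fin m → ℚ_[p]) →ₗ[ℚ_[p]] (Fin M0 → ℚ_[p]) := LinearMap.pi fun n => φ n
  have hker : ∀ l, L l = 0 → ∀ n, φ n l = 0 := by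
    intro l hl n
    have h1 : l ∈ (⨅ n : Fin M0, LinearMap.ker (φ n)) := by
      rw [Submodule.mem_iInf]
      intro i
      exact congrFun hl i
    have h2 : (⨅ n : Fin M0, LinearMap.ker (φ n)) = ⨅ n : Fin (max M0 (n+1)), LinearMap.ker (φ n) :=
      OrderDual.toDual.injective (hM0 (max M0 (n+1)) (le_max_left _ _))
    rw [h2, Submodule.mem_iInf] at h1
    exact h1 ⟨n, (Nat.lt_succ_self n).trans_le (le_max_right _ _)⟩
  obtain ⟨R, hR⟩ := LinearMap.exists_rightInverse_of_surjective L.rangeRestrict L.range_rangeRestrict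
  let R' := LinearMap.toContinuousLinearMap R
  have hRb : ∀ l, ‖R (L.rangeRestrict l)‖ ≤ ‖R'‖ * ‖L l‖ := fun l => R'.le_opNorm (L.rangeRestrict l)
  have hφR : ∀ n l, ‖φ n l‖ ≤ ‖c n‖ * (‖R'‖ * ‖L l‖) := by
    intro n l
    have h1 : L (l - R (L.rangeRestrict l)) = 0 := by
      have := LinearMap.congr_fun hR (L.rangeRestrict l)
      have h2 := congrArg Subtype.val this
      rw [map_sub, sub_eq_zero]
      exact h2.symm
    have h2 := hker _ h1 n
    rw [map_sub, sub_eq_zero] at h2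
    rw [h2]
    exact (hφn _ _).trans (by gcongr; exact hRb l)
  have hev : ∀ᶠ n in Filter.atTop, ‖c n‖ < (‖R'‖ + 1)⁻¹ := by
    have := hc.norm
    rw [norm_zero] at this
    exact this.eventually_lt_const (by positivity)
  obtain ⟨M1, hM1⟩ := Filter.eventually_atTop.mp hev
  set M := max (max M0 M1) 1 with hM
  refine ⟨M, le_max_right _ _, fun l => ?_⟩
  simp only [← hφ]
  by_cases hL : L l = 0
  · exact Or.inl (hker l hL)
  right
  have hne : (Finset.range M).Nonempty := ⟨0, Finset.mem_range.mpr (by omega)⟩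
  obtain ⟨n0, hn0, hmax⟩ := Finset.exists_max_image (Finset.range M) (fun n => ‖φ n l‖) hne
  obtain ⟨N, hNmem, hNmax⟩ := Finset.exists_max_image
    ((Finset.range M).filter fun n => ‖φ n l‖ = ‖φ n0 l‖) id ⟨n0, by simp [Finset.mem_range.mp hn0]⟩
  rw [Finset.mem_filter, Finset.mem_range] at hNmem
  refine ⟨N, hNmem.1.le, fun n hn => ?_⟩
  rw [hNmem.2]
  by_cases hnM : n < M
  · refine lt_of_le_of_ne (hmax n (Finset.mem_range.mpr hnM)) fun h => ?_
    have := hNmax n (Finset.mem_filter.mpr ⟨Finset.mem_range.mpr hnM, h⟩)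
    simp at this; omega
  · have hLpos : 0 < ‖L l‖ := norm_pos_iff.mpr hL
    have hcn := hM1 n (by omega)
    have hLle : ‖L l‖ ≤ ‖φ n0 l‖ := by
      rw [pi_norm_le_iff_of_nonneg (norm_nonneg _)]
      intro i
      exact hmax i (Finset.mem_range.mpr (by have := i.2; omega))
    refine lt_of_lt_of_le ?_ hLle
    calc ‖φ n l‖ ≤ ‖c n‖ * (‖R'‖ * ‖L l‖) := hφR n l
      _ ≤ (‖R'‖ + 1)⁻¹ * (‖R'‖ * ‖L l‖) := by gcongr
      _ < (‖R'‖ + 1)⁻¹ * ((‖R'‖ + 1) * ‖L l‖) := by gcongr; linarith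
      _ = ‖L l‖ := by field_simp


def Compat {S : Type*} [PartialOrder S] (F : Finset S) (s : S) : Prop :=
  s ∉ F ∧ IsChain (· ≤ ·) (insert s (F : Set S))

def Marked {S : Type*} [PartialOrder S] (ψ : S → ℚ_[p] → ℝ) (ε ρ : ℝ) (F : Finset S) (x : ℚ_[p]) : Prop :=
  ∃ G : Finset S, F ⊆ G ∧ IsChain (· ≤ ·) (G : Set S) ∧
    (∀ s ∈ G, s ∉ F → ε ≤ ψ s x ∧ ψ s x < ρ) ∧ ∀ s, Compat G s → ρ ≤ ψ s x

noncomputable def KK : ℕ → ℝ≥0∞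
  | 0 => 0
  | m + 1 => p * (1 + KK m)

theorem KK_ne_top (m : ℕ) : KK p m ≠ ⊤ := by
  induction m with
  | zero => simp [KK]
  | succ m ih =>
    rw [KK]
    exact ENNReal.mul_ne_top (ENNReal.natCast_ne_top _) (ENNReal.add_ne_top.mpr ⟨ENNReal.one_ne_top, ih⟩)

theorem rr_anti {i j : ℕ} (h : i ≤ j) : rr p j ≤ rr p i := by
  unfold rr
  exact pow_le_pow_of_le_one (inv_nonneg.mpr (p_pos' p).le) (inv_le_one_of_one_le₀ (one_lt_p' p).le) h

theorem lam_ball_succ (x y : ℚ_[p]) (j : ℕ) :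
    lam p (closedBall x (rr p j)) = p * lam p (closedBall y (rr p (j + 1))) := by
  rw [lam_ball, lam_ball, rr_succ, ENNReal.ofReal_mul (p_pos' p).le, ENNReal.ofReal_natCast]

open Classical in
theorem km {S : Type*} [PartialOrder S] (ψ : S → ℚ_[p] → ℝ) (ε ρ : ℝ) (θ : ℝ≥0∞) (D : ℕ)
    (hD : ∀ G : Finset S, IsChain (· ≤ ·) (G : Set S) → G.card ≤ D)
    (good : ∀ s a k, ‖a‖ ≤ 1 → (∃ x ∈ closedBall a (rr p k), ρ ≤ ψ s x) →
      lam p {x ∈ closedBall a (rr p k) | ψ s x < ε} ≤ θ * lam p (closedBall a (rr p k)))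
    (cont : ∀ s x, ‖x‖ ≤ 1 → ψ s x < ρ → ∃ k, ∀ x' ∈ closedBall x (rr p k), ψ s x' < ρ)
    (m : ℕ) : ∀ F : Finset S, IsChain (· ≤ ·) (F : Set S) → D ≤ F.card + m → ∀ a k, ‖a‖ ≤ 1 →
      (∀ s, Compat F s → ∃ x ∈ closedBall a (rr p k), ρ ≤ ψ s x) →
      lam p {x ∈ closedBall a (rr p k) | ¬ Marked p ψ ε ρ F x} ≤
        KK p m * θ * lam p (closedBall a (rr p k)) := by
  induction m with
  | zero =>
    intro F hF hc a k ha hs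
    have : {x ∈ closedBall a (rr p k) | ¬ Marked p ψ ε ρ F x} = ∅ := by
      rw [Set.eq_empty_iff_forall_notMem]
      rintro x ⟨-, hx⟩
      refine hx ⟨F, subset_rfl, hF, fun s h h' => absurd h h', fun s h => ?_⟩
      exfalso
      have := hD (insert s F) (by rw [Finset.coe_insert]; exact h.2)
      rw [Finset.card_insert_of_notMem h.1] at this
      omega
    rw [this]; simp
  | succ m ih =>
    intro F hF hc a k ha hs
    set B := closedBall a (rr p k) with hB
    set Bad := {x ∈ B | ¬ Marked p ψ ε ρ F x} with hBad
    let P : ℚ_[p] → ℕ → Prop := fun x j => ∃ s, Compat F s ∧ ∀ x' ∈ closedBall x (rr p j), ψ s x' < ρ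
    have hB1 : ∀ x ∈ B, ‖x‖ ≤ 1 := by
      intro x hx
      rw [hB, mem_closedBall, dist_eq_norm] at hx
      have : x = (x - a) + a := by ring
      rw [this]
      exact (IsUltrametricDist.norm_add_le_max _ _).trans (max_le (hx.trans (rr_le_one p k)) ha)
    have hex : ∀ x ∈ Bad, ∃ j, P x j := by
      rintro x ⟨hxB, hx⟩
      by_contra hcon
      refine hx ⟨F, subset_rfl, hF, fun s h h' => absurd h h', fun s h => ?_⟩
      by_contra hlt
      obtain ⟨j, hj⟩ := cont s x (hB1 x hxB) (not_le.mp hlt)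
      exact hcon ⟨j, s, h, hj⟩
    have hmin : ∀ x ∈ Bad, ∃ j, P x (j + 1) ∧ (∀ i ≤ j, ¬ P x i) ∧ k ≤ j := by
      intro x hx
      have h1 := Nat.find_spec (hex x hx)
      have h2 : ∀ i < Nat.find (hex x hx), ¬ P x i := fun i hi => Nat.find_min _ hi
      have h3 : k < Nat.find (hex x hx) := by
        by_contra hle
        obtain ⟨s, hsc, hs'⟩ := h1
        obtain ⟨z, hz, hz'⟩ := hs s hsc
        have hzx : z ∈ closedBall x (rr p (Nat.find (hex x hx))) := by
          apply closedBall_subset_closedBall (rr_anti p (not_lt.mp hle))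
          rw [hB, IsUltrametricDist.closedBall_eq_of_mem hx.1] at hz
          exact hz
        exact absurd (hs' z hzx) (not_lt.mpr hz')
      refine ⟨Nat.find (hex x hx) - 1, ?_, fun i hi => h2 i (by omega), by omega⟩
      rwa [Nat.sub_add_cancel (by omega)]
    choose! j hj using hmin
    let E : ℚ_[p] → Set ℚ_[p] := fun x => closedBall x (rr p (j x + 1))
    have hEdis : ∀ x ∈ Bad, ∀ y ∈ Bad, j x ≤ j y → (E x ∩ E y).Nonempty → E x = E y := by
      rintro x hx y hy hle ⟨z, hzx, hzy⟩
      have hyx : closedBall x (rr p (j x + 1)) = closedBall y (rr p (j x + 1)) := by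
        rw [IsUltrametricDist.closedBall_eq_of_mem hzx]
        have : z ∈ closedBall y (rr p (j x + 1)) := closedBall_subset_closedBall (rr_anti p (by omega)) hzy
        rw [IsUltrametricDist.closedBall_eq_of_mem this]
      have : P y (j x + 1) := by
        obtain ⟨s, h1, h2⟩ := (hj x hx).1
        exact ⟨s, h1, by rwa [← hyx]⟩
      have h : ¬ (j x + 1 ≤ j y) := fun h => (hj y hy).2.1 _ h this
      have : j x = j y := by omega
      simp only [E]
      rw [hyx, this]
    have hloc : ∀ x ∈ Bad, lam p (E x ∩ Bad) ≤ KK p (m + 1) * θ * lam p (E x) := by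
      intro x hx
      obtain ⟨⟨s, hsc, hsψ⟩, hnP, hkj⟩ := hj x hx
      have hsup : ∀ s, Compat F s → ∃ x' ∈ closedBall x (rr p (j x)), ρ ≤ ψ s x' := by
        intro s hs
        by_contra hcon
        push Not at hcon
        exact hnP _ le_rfl ⟨s, hs, hcon⟩
      have h1 := good s x (j x) (hB1 x hx.1) (hsup s hsc)
      have h2 := ih (insert s F) (by rw [Finset.coe_insert]; exact hsc.2)
        (by rw [Finset.card_insert_of_notMem hsc.1]; omega) x (j x) (hB1 x hx.1) (by
          intro s' hs'
          apply hsup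
          refine ⟨fun h => hs'.1 (Finset.mem_insert_of_mem h), hs'.2.mono ?_⟩
          apply Set.insert_subset_insert
          rw [Finset.coe_insert]; exact Set.subset_insert _ _)
      have hsub : E x ∩ Bad ⊆ {y ∈ closedBall x (rr p (j x)) | ψ s y < ε} ∪
          {y ∈ closedBall x (rr p (j x)) | ¬ Marked p ψ ε ρ (insert s F) y} := by
        rintro y ⟨hyE, hyB⟩
        have hy' : y ∈ closedBall x (rr p (j x)) := closedBall_subset_closedBall (rr_anti p (by omega)) hyE
        by_cases hlt : ψ s y < ε
        · exact Or.inl ⟨hy', hlt⟩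
        · refine Or.inr ⟨hy', ?_⟩
          rintro ⟨G, hFG, hG, hG1, hG2⟩
          refine hyB.2 ⟨G, (Finset.subset_insert _ _).trans hFG, hG, ?_, hG2⟩
          intro s' hs' hs'F
          by_cases he : s' = s
          · subst he; exact ⟨not_lt.mp hlt, hsψ y hyE⟩
          · exact hG1 s' hs' (by simp [he, hs'F])
      calc lam p (E x ∩ Bad) ≤ _ := measure_mono hsub
        _ ≤ _ := measure_union_le _ _
        _ ≤ _ := add_le_add h1 h2
        _ = KK p (m + 1) * θ * lam p (E x) := by
          rw [lam_ball_succ p x x (j x), KK]; ring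
    have hcount : (E '' Bad).Countable := by
      refine Set.PairwiseDisjoint.countable_of_isOpen (s := id) (a := E '' Bad) ?_ ?_ ?_
      · rintro _ ⟨x, hx, rfl⟩ _ ⟨y, hy, rfl⟩ hne
        rw [Function.onFun, id, id, Set.disjoint_iff_inter_eq_empty]
        by_contra hcon
        have hcon := Set.nonempty_iff_ne_empty.mpr hcon
        rcases le_total (j x) (j y) with h | h
        · exact hne (hEdis x hx y hy h hcon)
        · exact hne (hEdis y hy x hx h (by rwa [Set.inter_comm])).symm
      · rintro _ ⟨x, hx, rfl⟩
        exact IsUltrametricDist.isOpen_closedBall _ (rr_pos p _).ne'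
      · rintro _ ⟨x, hx, rfl⟩
        exact ⟨x, mem_closedBall_self (rr_pos p _).le⟩
    have hpd : (E '' Bad).PairwiseDisjoint id := by
      rintro _ ⟨x, hx, rfl⟩ _ ⟨y, hy, rfl⟩ hne
      rw [Function.onFun, id, id, Set.disjoint_iff_inter_eq_empty]
      by_contra hcon
      have hcon := Set.nonempty_iff_ne_empty.mpr hcon
      rcases le_total (j x) (j y) with h | h
      · exact hne (hEdis x hx y hy h hcon)
      · exact hne (hEdis y hy x hx h (by rwa [Set.inter_comm])).symm
    calc lam p Bad ≤ lam p (⋃ e ∈ E '' Bad, e ∩ Bad) := by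
          apply measure_mono
          intro x hx
          simp only [Set.mem_iUnion]
          exact ⟨E x, ⟨x, hx, rfl⟩, mem_closedBall_self (rr_pos p _).le, hx⟩
      _ ≤ ∑' e : E '' Bad, lam p (e ∩ Bad) := measure_biUnion_le _ hcount _
      _ ≤ ∑' e : E '' Bad, KK p (m + 1) * θ * lam p e := by
          apply ENNReal.tsum_le_tsum
          rintro ⟨_, x, hx, rfl⟩
          exact hloc x hx
      _ = KK p (m + 1) * θ * lam p (⋃ e ∈ E '' Bad, e) := by
          have := measure_biUnion (μ := lam p) hcount hpd ?_
          · simp only [id] at this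
            rw [ENNReal.tsum_mul_left, this]
          · rintro _ ⟨x, hx, rfl⟩
            exact measurableSet_closedBall
      _ ≤ _ := by
          gcongr
          simp only [Set.iUnion_subset_iff]
          rintro _ ⟨x, hx, rfl⟩
          rw [hB, IsUltrametricDist.closedBall_eq_of_mem hx.1]
          exact closedBall_subset_closedBall (rr_anti p (by have := (hj x hx).2.2; omega))

open Matrix in
theorem det_mul_rect {R : Type*} [CommRing R] {j m : ℕ} (A : Matrix (Fin j) (Fin m) R)
    (B : Matrix (Fin m) (Fin j) R) (h : ∀ I : Fin j → Fin m, (A.submatrix id I).det = 0) :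
    (A * B).det = 0 := by
  rw [← det_transpose]
  have e : (A * B)ᵀ = fun k => ∑ l, B l k • Aᵀ l := by
    ext k i
    simp [Matrix.mul_apply, mul_comm]
  have := (detRowAlternating (R := R) (n := Fin j)).toMultilinearMap.map_sum (fun k l => B l k • Aᵀ l)
  rw [e]
  refine Eq.trans this ?_
  apply Finset.sum_eq_zero
  intro I _
  have h2 := (detRowAlternating (R := R) (n := Fin j)).toMultilinearMap.map_smul_univ (fun k => B (I k) k) (fun k => Aᵀ (I k))
  refine h2.trans ?_
  have h3 : (detRowAlternating (R := R) (n := Fin j)).toMultilinearMap (fun k => Aᵀ (I k)) = 0 := by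
    have := h I
    rw [← det_transpose] at this
    exact this
  rw [h3, smul_zero]

open Matrix in
noncomputable def aN {j m : ℕ} (V : Matrix (Fin j) (Fin m) ℝ) : ℝ :=
  ‖fun I : Fin j → Fin m => (V.submatrix id I).det‖

theorem aN_nonneg {j m : ℕ} (V : Matrix (Fin j) (Fin m) ℝ) : 0 ≤ aN V := norm_nonneg _

theorem aN_ge {j m : ℕ} (V : Matrix (Fin j) (Fin m) ℝ) (I : Fin j → Fin m) :
    |(V.submatrix id I).det| ≤ aN V :=
  norm_le_pi_norm (fun I : Fin j → Fin m => (V.submatrix id I).det) I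

theorem aN_mul {j m : ℕ} (A : Matrix (Fin j) (Fin j) ℝ) (V : Matrix (Fin j) (Fin m) ℝ) :
    aN (A * V) = |A.det| * aN V := by
  unfold aN
  rw [← Real.norm_eq_abs, ← norm_smul]
  congr 1
  ext I
  rw [Pi.smul_apply, smul_eq_mul, ← Matrix.det_mul]
  congr 1

theorem aN_cons {j m : ℕ} (w : Fin m → ℝ) (V : Matrix (Fin j) (Fin m) ℝ) :
    aN (Matrix.of (Fin.cons w V : Fin (j+1) → Fin m → ℝ)) ≤ (j + 1) * (‖w‖ * aN V) := by
  unfold aN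
  rw [pi_norm_le_iff_of_nonneg (by positivity)]
  intro I
  rw [Matrix.det_succ_row_zero]
  refine (norm_sum_le _ _).trans ?_
  calc _ ≤ ∑ k : Fin (j+1), ‖w‖ * aN V := by
        apply Finset.sum_le_sum
        intro k _
        rw [norm_mul, norm_mul, norm_pow, norm_neg, norm_one, one_pow, one_mul]
        refine mul_le_mul (norm_le_pi_norm w (I k)) ?_ (norm_nonneg _) (norm_nonneg _)
        exact aN_ge V (fun l => I (k.succAbove l))
    _ = _ := by simp [aN]

open Matrix in
theorem minkowski {j m : ℕ} (hj : 0 < j) (V : Matrix (Fin j) (Fin m) ℝ) (hV : aN V ≠ 0) :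
    ∃ c : Fin j → ℤ, c ≠ 0 ∧ ‖(fun i => (c i : ℝ)) ᵥ* V‖ ≤ j * (aN V) ^ ((1 : ℝ) / j) := by
  have : NeZero j := ⟨hj.ne'⟩
  set a := aN V with ha
  have ha0 : 0 < a := lt_of_le_of_ne (aN_nonneg V) hV.symm
  have : Nonempty (Fin j → Fin m) := by
    by_contra hne
    rw [not_nonempty_iff] at hne
    apply hV
    rw [ha]; unfold aN
    apply norm_of_subsingleton
  obtain ⟨I, hI⟩ : ∃ I : Fin j → Fin m, |(V.submatrix id I).det| = a := by
    obtain ⟨I, hI⟩ := Finite.exists_max (fun I : Fin j → Fin m => |(V.submatrix id I).det|)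
    refine ⟨I, le_antisymm (aN_ge V I) ?_⟩
    rw [ha]; unfold aN
    rw [pi_norm_le_iff_of_nonneg (abs_nonneg _)]
    exact hI
  set A := V.submatrix id I with hA
  have hdet : A.det ≠ 0 := by
    intro h; rw [h, abs_zero] at hI; exact hV hI.symm
  have hli : LinearIndependent ℝ A.row := Matrix.linearIndependent_rows_of_det_ne_zero hdet
  let b : Module.Basis (Fin j) ℝ (Fin j → ℝ) := basisOfLinearIndependentOfCardEqFinrank hli (by simp)
  have hb : (b : Fin j → Fin j → ℝ) = A := coe_basisOfLinearIndependentOfCardEqFinrank hli _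
  set r := a ^ ((1 : ℝ) / j) with hr
  have hr0 : 0 ≤ r := by positivity
  have : Countable (Submodule.span ℤ (Set.range b)).toAddSubgroup := by
    change Countable (Submodule.span ℤ (Set.range b))
    infer_instance
  have : DiscreteTopology (Submodule.span ℤ (Set.range b)).toAddSubgroup := by
    change DiscreteTopology (Submodule.span ℤ (Set.range b))
    infer_instance
  obtain ⟨x, hx0, hx⟩ := exists_ne_zero_mem_lattice_of_measure_mul_two_pow_le_measure
    (μ := (volume : Measure (Fin j → ℝ))) (s := closedBall 0 r)
    (ZSpan.isAddFundamentalDomain' b volume) (fun x hx => by simpa using hx) (convex_closedBall _ _)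
    (isCompact_closedBall _ _) (by
      rw [ZSpan.volume_fundamentalDomain, Real.volume_pi_closedBall _ hr0, hb]
      have : (Matrix.of A).det = A.det := rfl
      rw [this, hI, mul_pow, hr, ← Real.rpow_natCast, ← Real.rpow_natCast, ← Real.rpow_mul ha0.le]
      simp only [Fintype.card_fin, Module.finrank_fintype_fun_eq_card]
      rw [one_div, inv_mul_cancel₀ (by positivity), Real.rpow_one, mul_comm, Real.rpow_natCast]
      rw [ENNReal.ofReal_mul (by positivity), ENNReal.ofReal_pow (by norm_num)]
      simp)
  have hxm := x.2
  rw [Submodule.mem_toAddSubgroup, Submodule.mem_span_range_iff_exists_fun] at hxm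
  obtain ⟨c, hc⟩ := hxm
  have hcx : (fun i => (c i : ℝ)) ᵥ* A = (x : Fin j → ℝ) := by
    rw [← hc, hb]
    ext k
    simp [Matrix.vecMul, dotProduct]
  refine ⟨c, ?_, ?_⟩
  · rintro rfl
    apply hx0
    ext1
    rw [← hc]; simp
  · rw [pi_norm_le_iff_of_nonneg (by positivity)]
    intro l
    have h1 : A *ᵥ (cramer A (fun i => V i l)) = A.det • (fun i => V i l) := mulVec_cramer _ _
    have h2 : A.det * ((fun i => (c i : ℝ)) ᵥ* V) l = (x : Fin j → ℝ) ⬝ᵥ cramer A (fun i => V i l) := by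
      rw [← hcx, ← Matrix.dotProduct_mulVec, h1, dotProduct_smul]
      rfl
    have h3 : ∀ k, |cramer A (fun i => V i l) k| ≤ a := by
      intro k
      rw [cramer_apply]
      have : A.updateCol k (fun i => V i l) = V.submatrix id (Function.update I k l) := by
        ext i k'
        by_cases h : k' = k
        · subst h; simp
        · simp [h, hA]
      rw [this]
      exact aN_ge V _
    have h4 : |A.det * ((fun i => (c i : ℝ)) ᵥ* V) l| ≤ j * r * a := by
      rw [h2]
      refine (Finset.abs_sum_le_sum_abs _ _).trans ?_
      calc _ ≤ ∑ k : Fin j, r * a := by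
            apply Finset.sum_le_sum
            intro k _
            rw [abs_mul]
            refine mul_le_mul ?_ (h3 k) (abs_nonneg _) hr0
            have := norm_le_pi_norm (x : Fin j → ℝ) k
            rw [mem_closedBall_zero_iff] at hx
            exact this.trans hx
        _ = _ := by simp; ring
    rw [abs_mul, hI, mul_comm] at h4
    exact le_of_mul_le_mul_right h4 ha0

open Matrix in
theorem aN_ne_zero {j m : ℕ} (U : Matrix (Fin j) (Fin m) ℤ) (hU : ∀ c : Fin j → ℤ, c ᵥ* U = 0 → c = 0)
    (w : Fin m → ℝ) (hw : ∀ l, w l ≠ 0) :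
    aN (U.map (Int.cast : ℤ → ℝ) * diagonal w) ≠ 0 := by
  intro h0
  have hminor : ∀ I : Fin j → Fin m, (U.submatrix id I).det = 0 := by
    intro I
    have h1 := aN_ge (U.map (Int.cast : ℤ → ℝ) * diagonal w) I
    rw [h0] at h1
    have h2 := abs_nonpos_iff.mp h1
    have : (U.map (Int.cast : ℤ → ℝ) * diagonal w).submatrix id I =
      (U.submatrix id I).map (Int.cast : ℤ → ℝ) * diagonal (fun k => w (I k)) := by
      ext i k; simp [Matrix.mul_diagonal]
    rw [this, det_mul, det_diagonal] at h2
    rcases mul_eq_zero.mp h2 with h | h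
    · have h5 := (Int.castRingHom ℝ).map_det (U.submatrix id I)
      have h6 : (Int.castRingHom ℝ).mapMatrix (U.submatrix id I) = (U.submatrix id I).map (Int.cast : ℤ → ℝ) := rfl
      rw [h6, h] at h5
      simpa using h5
    · exact absurd h (Finset.prod_ne_zero_iff.mpr fun k _ => hw _)
  have hd := det_mul_rect U Uᵀ hminor
  rw [← exists_vecMul_eq_zero_iff] at hd
  obtain ⟨c, hc0, hc⟩ := hd
  apply hc0
  have : (c ᵥ* U) ⬝ᵥ (c ᵥ* U) = 0 := by
    have h7 : (c ᵥ* (U * Uᵀ)) ⬝ᵥ c = 0 := by rw [hc]; simp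
    rw [← vecMul_vecMul, ← Matrix.dotProduct_mulVec, mulVec_transpose] at h7
    exact h7
  rw [dotProduct_self_eq_zero] at this
  exact hU c this

def castQ {m : ℕ} (q : Fin m → ℤ) : Fin m → ℚ := fun l => (q l : ℚ)

open Matrix in
def IsLB {m j : ℕ} (W : Submodule ℚ (Fin m → ℚ)) (U : Matrix (Fin j) (Fin m) ℤ) : Prop :=
  (∀ c : Fin j → ℤ, c ᵥ* U = 0 → c = 0) ∧ ∀ q : Fin m → ℤ, castQ q ∈ W ↔ ∃ c : Fin j → ℤ, q = c ᵥ* U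

open Matrix in
theorem exists_LB {m : ℕ} (W : Submodule ℚ (Fin m → ℚ)) :
    ∃ U : Matrix (Fin (Module.finrank ℚ W)) (Fin m) ℤ, IsLB W U := by
  let La : Submodule ℤ (Fin m → ℤ) :=
    { carrier := {q | castQ q ∈ W}
      add_mem' := by
        intro a b ha hb
        have : castQ (a + b) = castQ a + castQ b := by ext l; simp [castQ]
        simp only [Set.mem_ofPred_eq] at *
        rw [this]; exact W.add_mem ha hb
      zero_mem' := by
        have : castQ (0 : Fin m → ℤ) = 0 := by ext l; simp [castQ]
        simp only [Set.mem_ofPred_eq]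
        rw [this]; exact W.zero_mem
      smul_mem' := by
        intro c a ha
        have : castQ (c • a) = (c : ℚ) • castQ a := by ext l; simp [castQ]
        simp only [Set.mem_ofPred_eq] at *
        rw [this]; exact W.smul_mem _ ha }
  let b := Module.finBasis ℤ La
  set j := Module.finrank ℤ La with hj
  let u' : Fin j → W := fun i => ⟨castQ (b i : Fin m → ℤ), (b i).2⟩
  have hli : LinearIndependent ℚ u' := by
    rw [← LinearIndependent.iff_fractionRing ℤ ℚ, Fintype.linearIndependent_iff]
    intro c hc
    have := Fintype.linearIndependent_iff.mp b.linearIndependent c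
    apply this
    ext l
    have h := congrFun (congrArg Subtype.val hc) l
    simp [u', castQ] at h
    simp
    exact_mod_cast h
  have hsp : ⊤ ≤ Submodule.span ℚ (Set.range u') := by
    rintro ⟨w, hw⟩ -
    obtain ⟨N, hN⟩ := IsLocalization.exist_integer_multiples_of_finite (nonZeroDivisors ℤ) w
    choose q hq using hN
    have hN0 : ((N : ℤ) : ℚ) ≠ 0 := by exact_mod_cast nonZeroDivisors.coe_ne_zero N
    have hqe : castQ q = ((N : ℤ) : ℚ) • w := by
      ext l; simpa [castQ] using hq l
    have hqL : q ∈ La := by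
      change castQ q ∈ W
      rw [hqe]; exact W.smul_mem _ hw
    rw [Submodule.mem_span_range_iff_exists_fun]
    refine ⟨fun i => (b.repr ⟨q, hqL⟩ i : ℚ) / (N : ℤ), ?_⟩
    ext l
    have h := b.sum_repr ⟨q, hqL⟩
    have h := congrFun (congrArg Subtype.val h) l
    have h2 : (((N : ℤ) : ℚ)) * w l = q l := by
      have := congrFun hqe l; simpa [castQ] using this.symm
    have h3 : w l = (q l : ℚ) / (N : ℤ) := by rw [← h2]; field_simp
    simp only [u', Submodule.coe_sum, Submodule.coe_smul, Finset.sum_apply, Pi.smul_apply, castQ, smul_eq_mul] at h ⊢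
    rw [h3, ← h]
    push_cast
    rw [Finset.sum_div]
    apply Finset.sum_congr rfl
    intro i _
    ring
  have hfr : Module.finrank ℚ W = j := by
    rw [Module.finrank_eq_card_basis (Module.Basis.mk hli hsp), Fintype.card_fin]
  rw [hfr]
  refine ⟨Matrix.of fun i => (b i : Fin m → ℤ), ?_, ?_⟩
  · intro c hc
    have := Fintype.linearIndependent_iff.mp b.linearIndependent c
    ext i
    apply this
    ext l
    have h := congrFun hc l
    simpa [Matrix.vecMul, dotProduct] using h
  · intro q
    constructor
    · intro hq
      refine ⟨fun i => b.repr ⟨q, hq⟩ i, ?_⟩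
      have h := b.sum_repr ⟨q, hq⟩
      have h := congrArg Subtype.val h
      ext l
      have h := congrFun h l
      simp only [Submodule.coe_sum, Submodule.coe_smul, Finset.sum_apply, Pi.smul_apply, smul_eq_mul] at h
      rw [← h]
      simp [Matrix.vecMul, dotProduct]
    · rintro ⟨c, rfl⟩
      have : c ᵥ* (Matrix.of fun i => (b i : Fin m → ℤ)) = ((∑ i, c i • b i : La) : Fin m → ℤ) := by
        ext l
        simp [Matrix.vecMul, dotProduct]
      rw [this]
      exact (∑ i, c i • b i : La).2

noncomputable def Lf {m : ℕ} (y : Fin m → ℚ_[p]) (q : Fin m → ℤ) : ℚ_[p] := ∑ l, (q l : ℚ_[p]) * y l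

open Matrix in
theorem Lf_vecMul {m j : ℕ} (y : Fin m → ℚ_[p]) (c : Fin j → ℤ) (U : Matrix (Fin j) (Fin m) ℤ) :
    Lf p y (c ᵥ* U) = ∑ i, (c i : ℚ_[p]) * Lf p y (U i) := by
  simp only [Lf, Matrix.vecMul, dotProduct, Finset.mul_sum]
  rw [Finset.sum_comm]
  apply Finset.sum_congr rfl
  intro l _
  push_cast
  rw [Finset.sum_mul]
  apply Finset.sum_congr rfl
  intro i _
  ring

noncomputable def wtd {m : ℕ} (t : Fin m → ℕ) : Fin m → ℝ := fun l => ((p : ℝ) ^ (t l))⁻¹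
noncomputable def wt {m : ℕ} (t : Fin m → ℕ) (q : Fin m → ℤ) : Fin m → ℝ := fun l => q l * wtd p t l

theorem wtd_pos {m : ℕ} (t : Fin m → ℕ) (l) : 0 < wtd p t l := by
  have := p_pos' p
  unfold wtd; positivity

open Matrix in
noncomputable def aU {m j : ℕ} (t : Fin m → ℕ) (U : Matrix (Fin j) (Fin m) ℤ) : ℝ :=
  aN (U.map (Int.cast : ℤ → ℝ) * diagonal (wtd p t))

noncomputable def bU {m j : ℕ} (t : Fin m → ℕ) (U : Matrix (Fin j) (Fin m) ℤ) (y : Fin m → ℚ_[p]) : ℝ :=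
  max 1 ((p : ℝ) ^ (∑ l, t l) * ‖fun i => Lf p y (U i)‖)

theorem norm_int_sum_le {j : ℕ} (c : Fin j → ℤ) (r : Fin j → ℚ_[p]) (B : ℝ) (hB : 0 ≤ B)
    (h : ∀ i, ‖r i‖ ≤ B) : ‖∑ i, (c i : ℚ_[p]) * r i‖ ≤ B := by
  apply IsUltrametricDist.norm_sum_le_of_forall_le_of_nonneg hB
  intro i _
  rw [norm_mul]
  calc _ ≤ 1 * B := mul_le_mul (Padic.norm_int_le_one _) (h i) (norm_nonneg _) zero_le_one
    _ = B := one_mul B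

theorem exists_P {j : ℕ} (T : ℕ) (r : Fin j → ℚ_[p]) :
    ∃ P : Matrix (Fin j) (Fin j) ℤ, (P.det : ℝ) = max 1 ((p : ℝ) ^ T * ‖r‖) ∧
      ∀ i, ‖∑ k, (P i k : ℚ_[p]) * r k‖ ≤ ((p : ℝ) ^ T)⁻¹ := by
  have hp := p_pos' p
  have hp1 := one_lt_p' p
  by_cases h : (p : ℝ) ^ T * ‖r‖ ≤ 1
  · refine ⟨1, by simp [h], ?_⟩
    intro i
    have : ∑ k, ((1 : Matrix (Fin j) (Fin j) ℤ) i k : ℚ_[p]) * r k = r i := by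
      simp [Matrix.one_apply]
    rw [this]
    refine (norm_le_pi_norm r i).trans ?_
    rw [← one_div, le_div_iff₀ (by positivity), mul_comm]; exact h
  · push Not at h
    have hr0 : ‖r‖ ≠ 0 := by rintro h0; rw [h0, mul_zero] at h; linarith
    have hj : Nonempty (Fin j) := by
      by_contra hne
      rw [not_nonempty_iff] at hne
      exact hr0 (norm_of_subsingleton r)
    obtain ⟨i0, hi0⟩ : ∃ i0, ‖r i0‖ = ‖r‖ := by
      obtain ⟨i0, hi0⟩ := Finite.exists_max (fun i => ‖r i‖)
      refine ⟨i0, le_antisymm (norm_le_pi_norm r i0) ?_⟩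
      rw [pi_norm_le_iff_of_nonneg (norm_nonneg _)]
      exact hi0
    have hri : r i0 ≠ 0 := by
      intro h0; rw [h0, norm_zero] at hi0; exact hr0 hi0.symm
    obtain ⟨e, he⟩ : ∃ e : ℕ, (p : ℝ) ^ T * ‖r‖ = (p : ℝ) ^ e := by
      have hv := Padic.norm_eq_zpow_neg_valuation hri
      rw [hi0] at hv
      have h2 : (p : ℝ) ^ T * ‖r‖ = (p : ℝ) ^ ((T : ℤ) + -(r i0).valuation) := by
        rw [hv, zpow_add₀ hp.ne', zpow_natCast]
      have h3 : 0 < (T : ℤ) + -(r i0).valuation := by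
        rw [h2] at h
        by_contra hneg
        exact absurd h (not_lt.mpr (zpow_le_one_of_nonpos₀ hp1.le (not_lt.mp hneg)))
      refine ⟨((T : ℤ) + -(r i0).valuation).toNat, ?_⟩
      rw [h2, ← zpow_natCast, Int.toNat_of_nonneg h3.le]
    have hc : ∀ i, ∃ c : ℤ, ‖r i / r i0 - c‖ ≤ ((p : ℝ) ^ e)⁻¹ := by
      intro i
      have h1 : ‖r i / r i0‖ ≤ 1 := by
        rw [norm_div, hi0]
        exact div_le_one_of_le₀ (norm_le_pi_norm r i) (norm_nonneg _)
      obtain ⟨X, hX⟩ : ∃ X : ℤ_[p], (X : ℚ_[p]) = r i / r i0 := ⟨⟨_, h1⟩, rfl⟩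
      refine ⟨(PadicInt.appr X e : ℕ), ?_⟩
      have := PadicInt.appr_spec e X
      rw [← PadicInt.norm_le_pow_iff_mem_span_pow, PadicInt.norm_def, PadicInt.coe_sub, PadicInt.coe_natCast, hX] at this
      rw [zpow_neg, zpow_natCast] at this
      exact_mod_cast this
    choose c hc using hc
    let col : Fin j → ℤ := fun i => if i = i0 then (p : ℤ) ^ e else - c i
    refine ⟨(1 : Matrix (Fin j) (Fin j) ℤ).updateCol i0 col, ?_, ?_⟩
    · rw [← Matrix.cramer_apply, Matrix.cramer_one, max_eq_right h.le, he]
      simp [col]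
    · intro i
      have hsum : ∀ i, ∑ k, (((1 : Matrix (Fin j) (Fin j) ℤ).updateCol i0 col) i k : ℚ_[p]) * r k
          = (if i = i0 then 0 else r i) + col i * r i0 := by
        intro i
        rw [← Finset.add_sum_erase _ _ (Finset.mem_univ i0), add_comm]
        congr 1
        · rw [Finset.sum_congr rfl (g := fun k => if k = i then r k else 0)]
          · rw [Finset.sum_ite_eq']
            by_cases hii : i = i0 <;> simp [hii]
          · intro k hk
            rw [Matrix.updateCol_ne (Finset.ne_of_mem_erase hk)]
            rw [Matrix.one_apply]
            by_cases hki : k = i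
            · simp [hki]
            · simp [hki, Ne.symm hki]
        · simp
      rw [hsum]
      have hT : ((p : ℝ) ^ e)⁻¹ * ‖r‖ = ((p : ℝ) ^ T)⁻¹ := by
        rw [← he]; field_simp
      by_cases hii : i = i0
      · simp only [hii, if_true, col, zero_add, norm_mul, hi0]
        rw [← hT]
        simp
      · simp only [hii, if_false, col]
        have : r i + ((- c i : ℤ) : ℚ_[p]) * r i0 = (r i / r i0 - c i) * r i0 := by
          push_cast; field_simp; ring
        rw [this, norm_mul, hi0, ← hT]
        gcongr
        exact hc i

open Matrix in
theorem wt_vecMul {m j : ℕ} (t : Fin m → ℕ) (c : Fin j → ℤ) (U : Matrix (Fin j) (Fin m) ℤ) :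
    wt p t (c ᵥ* U) = (fun i => (c i : ℝ)) ᵥ* (U.map (Int.cast : ℤ → ℝ) * diagonal (wtd p t)) := by
  rw [← vecMul_vecMul]
  ext l
  rw [Matrix.vecMul_diagonal]
  simp [wt, Matrix.vecMul, dotProduct]

open Matrix in
theorem map_cast_mul {j m k : ℕ} (A : Matrix (Fin j) (Fin k) ℤ) (U : Matrix (Fin k) (Fin m) ℤ) :
    (A * U).map (Int.cast : ℤ → ℝ) = A.map (Int.cast : ℤ → ℝ) * U.map (Int.cast : ℤ → ℝ) := by
  ext a b; simp [Matrix.mul_apply]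

open Matrix in
theorem det_map_cast {j : ℕ} (A : Matrix (Fin j) (Fin j) ℤ) :
    (A.map (Int.cast : ℤ → ℝ)).det = (A.det : ℝ) := by
  have h5 := (Int.castRingHom ℝ).map_det A
  exact h5.symm

open Matrix in
theorem aU_mul {j m : ℕ} (t : Fin m → ℕ) (A : Matrix (Fin j) (Fin j) ℤ) (U : Matrix (Fin j) (Fin m) ℤ) :
    aU p t (A * U) = |(A.det : ℝ)| * aU p t U := by
  unfold aU
  rw [map_cast_mul, Matrix.mul_assoc, aN_mul, det_map_cast]

open Matrix in
theorem lower_bound {m j : ℕ} (hm : 1 ≤ m) (hjm : j ≤ m) (t : Fin m → ℕ) (U : Matrix (Fin j) (Fin m) ℤ)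
    (hU : ∀ c : Fin j → ℤ, c ᵥ* U = 0 → c = 0) (y : Fin m → ℚ_[p]) (η : ℝ) (h0 : 0 < η) (h1 : η ≤ 1)
    (H : ∀ q : Fin m → ℤ, q ≠ 0 → ‖Lf p y q‖ ≤ ((p : ℝ) ^ (∑ l, t l))⁻¹ → η ≤ ‖wt p t q‖) :
    (η / m) ^ m ≤ aU p t U * bU p t U y := by
  have hm0 : (0 : ℝ) < m := by exact_mod_cast hm
  have hηm : η / m ≤ 1 := by
    rw [div_le_one hm0]; exact h1.trans (by exact_mod_cast hm)
  have hp := p_pos' p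
  rcases Nat.eq_zero_or_pos j with rfl | hj
  · have ha : 1 ≤ aU p t U := by
      unfold aU
      have := aN_ge (U.map (Int.cast : ℤ → ℝ) * diagonal (wtd p t)) Fin.elim0
      simpa using this
    have hb : 1 ≤ bU p t U y := le_max_left _ _
    calc (η / m) ^ m ≤ 1 := pow_le_one₀ (by positivity) hηm
      _ ≤ _ := by nlinarith
  · obtain ⟨P, hP, hPL⟩ := exists_P p (∑ l, t l) (fun i => Lf p y (U i))
    have hb : 1 ≤ bU p t U y := le_max_left _ _
    have hPb : (P.det : ℝ) = bU p t U y := hP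
    have hdet : P.det ≠ 0 := by
      intro h; rw [h, Int.cast_zero] at hPb; linarith
    have hPU : ∀ c : Fin j → ℤ, c ᵥ* (P * U) = 0 → c = 0 := by
      intro c hc
      rw [← vecMul_vecMul] at hc
      have := hU _ hc
      by_contra hne
      exact hdet (exists_vecMul_eq_zero_iff.mp ⟨c, hne, this⟩)
    have hae : aU p t (P * U) = aU p t U * bU p t U y := by
      rw [aU_mul, hPb, abs_of_pos (by linarith), mul_comm]
    have hane : aU p t (P * U) ≠ 0 := aN_ne_zero _ hPU _ fun l => (wtd_pos p t l).ne'
    obtain ⟨c, hc0, hc⟩ := minkowski hj _ hane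
    rw [← wt_vecMul] at hc
    have hq := H (c ᵥ* (P * U)) (fun h => hc0 (hPU c h)) (by
      rw [Lf_vecMul]
      apply norm_int_sum_le p _ _ _ (by positivity)
      intro i
      have : (P * U) i = P i ᵥ* U := rfl
      rw [this, Lf_vecMul]
      exact hPL i)
    rw [← hae]
    set a := aU p t (P * U) with ha
    have ha0 : 0 ≤ a := aN_nonneg _
    have h2 : η ≤ m * a ^ ((1 : ℝ) / j) := by
      refine (hq.trans hc).trans ?_
      have : (j : ℝ) ≤ m := by exact_mod_cast hjm
      change j * a ^ ((1 : ℝ) / j) ≤ _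
      gcongr
    have h3 : η / m ≤ a ^ ((1 : ℝ) / j) := by
      rw [div_le_iff₀ hm0, mul_comm]; exact h2
    calc (η / m) ^ m ≤ (η / m) ^ j := pow_le_pow_of_le_one (by positivity) hηm hjm
      _ ≤ (a ^ ((1 : ℝ) / j)) ^ j := by gcongr
      _ = a := by
        rw [← Real.rpow_natCast, ← Real.rpow_mul ha0, one_div, inv_mul_cancel₀ (by positivity), Real.rpow_one]

open Matrix in
theorem step {m j : ℕ} (t : Fin m → ℕ) (W V : Submodule ℚ (Fin m → ℚ)) (U : Matrix (Fin j) (Fin m) ℤ)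
    (U' : Matrix (Fin (j+1)) (Fin m) ℤ) (hU : IsLB W U) (hU' : IsLB V U') (w : Fin m → ℤ)
    (hwW : castQ w ∉ W) (hwV : castQ w ∈ V) (hWV : W ≤ V) (y : Fin m → ℚ_[p])
    (hw : ‖Lf p y w‖ ≤ ((p : ℝ) ^ (∑ l, t l))⁻¹) :
    aU p t U' * bU p t U' y ≤ (j + 1) * ‖wt p t w‖ * (aU p t U * bU p t U y) := by
  have hp := p_pos' p
  let X : Matrix (Fin (j+1)) (Fin m) ℤ := Matrix.of (Fin.cons w U : Fin (j+1) → Fin m → ℤ)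
  have hX0 : X 0 = w := rfl
  have hXs : ∀ i : Fin j, X i.succ = U i := fun i => rfl
  have hXV : ∀ i, castQ (X i) ∈ V := by
    intro i
    refine Fin.cases ?_ ?_ i
    · exact hwV
    · intro k
      apply hWV
      rw [hXs, hU.2]
      exact ⟨Pi.single k 1, by rw [single_one_vecMul]; rfl⟩
  have hA : ∀ i, ∃ c : Fin (j+1) → ℤ, X i = c ᵥ* U' := fun i => (hU'.2 _).mp (hXV i)
  choose A hA using hA
  have hXA : X = Matrix.of A * U' := by
    ext i l
    rw [hA i]; rfl
  have hXvec : ∀ c : Fin (j+1) → ℤ, c ᵥ* X = c 0 • w + (fun k : Fin j => c k.succ) ᵥ* U := by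
    intro c
    ext l
    rw [Pi.add_apply, Matrix.vecMul, dotProduct, Fin.sum_univ_succ]
    rfl
  have hXind : ∀ c : Fin (j+1) → ℤ, c ᵥ* X = 0 → c = 0 := by
    intro c hc
    rw [hXvec] at hc
    by_cases hc0 : c 0 = 0
    · rw [hc0, zero_smul, zero_add] at hc
      have := hU.1 _ hc
      ext i
      refine Fin.cases hc0 (fun k => congrFun this k) i
    · exfalso
      apply hwW
      have h1 : castQ ((-(fun k : Fin j => c k.succ)) ᵥ* U) ∈ W := (hU.2 _).mpr ⟨_, rfl⟩
      have h2 : (-(fun k : Fin j => c k.succ)) ᵥ* U = c 0 • w := by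
        rw [neg_vecMul]; exact (eq_neg_of_add_eq_zero_left hc).symm
      rw [h2] at h1
      have h3 : castQ w = ((c 0 : ℚ)⁻¹) • castQ (c 0 • w) := by
        have : (c 0 : ℚ) ≠ 0 := by exact_mod_cast hc0
        ext l; simp [castQ, this]
      rw [h3]; exact W.smul_mem _ h1
  have hdet : (Matrix.of A).det ≠ 0 := by
    intro h
    obtain ⟨v, hv0, hv⟩ := exists_vecMul_eq_zero_iff.mpr h
    apply hv0
    apply hXind
    rw [hXA, ← vecMul_vecMul, hv, zero_vecMul]
  set N : ℤ := (Matrix.of A).det with hN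
  have haX : aU p t X = |(N : ℝ)| * aU p t U' := by rw [hXA, aU_mul]
  have haX2 : aU p t X ≤ (j + 1) * (‖wt p t w‖ * aU p t U) := by
    have := aN_cons (wt p t w) (U.map (Int.cast : ℤ → ℝ) * diagonal (wtd p t))
    unfold aU
    convert this using 2
    ext i l
    rw [mul_diagonal]
    refine Fin.cases ?_ (fun k => ?_) i
    · rfl
    · exact (mul_diagonal _ _ _ _).symm
  have hNabs : (1 : ℝ) ≤ |(N : ℝ)| := by exact_mod_cast Int.one_le_abs hdet
  have hbU : 1 ≤ bU p t U y := le_max_left _ _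
  have hNp : 1 ≤ |(N : ℝ)| * ‖(N : ℚ_[p])‖ := by
    have hd : ((p : ℤ) ^ (padicValInt p N)) ∣ N := padicValInt_dvd N
    have h1 : ((p : ℝ) ^ (padicValInt p N)) ≤ |(N : ℝ)| := by
      have := Int.le_of_dvd (abs_pos.mpr hdet) ((dvd_abs _ _).mpr hd)
      exact_mod_cast this
    have h2 : ‖(N : ℚ_[p])‖ = ((p : ℝ) ^ (padicValInt p N))⁻¹ := by
      have h3 : (N : ℚ_[p]) ≠ 0 := by exact_mod_cast hdet
      rw [Padic.norm_eq_zpow_neg_valuation h3, Padic.valuation_intCast, _root_.zpow_neg, zpow_natCast]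
    rw [h2, ← div_eq_mul_inv, one_le_div (by positivity)]
    exact h1
  have hN0 : 0 < ‖(N : ℚ_[p])‖ := norm_pos_iff.mpr (by exact_mod_cast hdet)
  set PT := (p : ℝ) ^ (∑ l, t l) with hPT
  have hPT0 : 0 < PT := by positivity
  have hbU' : bU p t U' y ≤ |(N : ℝ)| * bU p t U y := by
    unfold bU
    rw [← hPT]
    apply max_le
    · change 1 ≤ |(N : ℝ)| * bU p t U y
      nlinarith
    · change _ ≤ |(N : ℝ)| * bU p t U y
      have hLX : ∀ i, ‖Lf p y (X i)‖ ≤ bU p t U y / PT := by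
        intro i
        rw [le_div_iff₀ hPT0]
        refine Fin.cases ?_ (fun k => ?_) i
        · rw [hX0]
          refine le_trans ?_ hbU
          calc _ ≤ PT⁻¹ * PT := by gcongr
            _ = 1 := inv_mul_cancel₀ hPT0.ne'
        · rw [hXs, mul_comm]
          refine le_trans ?_ (le_max_right _ _)
          rw [← hPT]
          gcongr
          exact norm_le_pi_norm (fun i => Lf p y (U i)) k
      have hL' : ∀ i, ‖Lf p y (U' i)‖ ≤ |(N : ℝ)| * (bU p t U y / PT) := by
        intro i
        have hadj : (adjugate (Matrix.of A)) * X = N • U' := by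
          rw [hXA, ← Matrix.mul_assoc, adjugate_mul, ← hN, Matrix.smul_mul, Matrix.one_mul]
        have h1 : (adjugate (Matrix.of A)) i ᵥ* X = N • U' i := by
          have := congrFun hadj i
          exact this
        have h2 : Lf p y (N • U' i) = N * Lf p y (U' i) := by
          simp [Lf, Finset.mul_sum, mul_assoc]
        have h3 : ‖(N : ℚ_[p])‖ * ‖Lf p y (U' i)‖ ≤ bU p t U y / PT := by
          rw [← norm_mul, ← h2, ← h1, Lf_vecMul]
          exact norm_int_sum_le p _ _ _ (by positivity) hLX
        have h4 : ‖Lf p y (U' i)‖ ≤ (|(N : ℝ)| * ‖(N : ℚ_[p])‖) * ‖Lf p y (U' i)‖ :=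
          le_mul_of_one_le_left (norm_nonneg _) hNp
        calc _ ≤ _ := h4
          _ = |(N : ℝ)| * (‖(N : ℚ_[p])‖ * ‖Lf p y (U' i)‖) := by ring
          _ ≤ _ := by gcongr
      calc _ ≤ PT * (|(N : ℝ)| * (bU p t U y / PT)) := by
            gcongr
            rw [pi_norm_le_iff_of_nonneg (by positivity)]
            exact hL'
        _ = _ := by field_simp
  calc aU p t U' * bU p t U' y ≤ aU p t U' * (|(N : ℝ)| * bU p t U y) := by
        gcongr
        exact aN_nonneg _
    _ = aU p t X * bU p t U y := by rw [haX]; ring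
    _ ≤ ((j + 1) * (‖wt p t w‖ * aU p t U)) * bU p t U y := by gcongr
    _ = _ := by ring

noncomputable def ub {m : ℕ} (W : Submodule ℚ (Fin m → ℚ)) : Matrix (Fin (Module.finrank ℚ W)) (Fin m) ℤ :=
  (exists_LB W).choose

theorem ub_spec {m : ℕ} (W : Submodule ℚ (Fin m → ℚ)) : IsLB W (ub W) := (exists_LB W).choose_spec

noncomputable def psi {m : ℕ} (t : Fin m → ℕ) (Y : ℚ_[p] → Fin m → ℚ_[p])
    (W : Submodule ℚ (Fin m → ℚ)) (x : ℚ_[p]) : ℝ := aU p t (ub W) * bU p t (ub W) (Y x)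

theorem psi_zero {m j : ℕ} (hj : j = 0) (t : Fin m → ℕ) (U : Matrix (Fin j) (Fin m) ℤ) (y : Fin m → ℚ_[p]) :
    aU p t U * bU p t U y ≤ 1 := by
  subst hj
  have h1 : aU p t U ≤ 1 := by
    unfold aU aN
    rw [pi_norm_le_iff_of_nonneg zero_le_one]
    intro I
    simp
  have h2 : bU p t U y = 1 := by
    unfold bU
    rw [norm_of_subsingleton]; simp
  rw [h2, mul_one]; exact h1

theorem step' {m j j' : ℕ} (hj' : j' = j + 1) (t : Fin m → ℕ) (W V : Submodule ℚ (Fin m → ℚ)) (U : Matrix (Fin j) (Fin m) ℤ)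
    (U' : Matrix (Fin j') (Fin m) ℤ) (hU : IsLB W U) (hU' : IsLB V U') (w : Fin m → ℤ)
    (hwW : castQ w ∉ W) (hwV : castQ w ∈ V) (hWV : W ≤ V) (y : Fin m → ℚ_[p])
    (hw : ‖Lf p y w‖ ≤ ((p : ℝ) ^ (∑ l, t l))⁻¹) :
    aU p t U' * bU p t U' y ≤ j' * ‖wt p t w‖ * (aU p t U * bU p t U y) := by
  subst hj'
  have := step p t W V U U' hU hU' w hwW hwV hWV y hw
  exact_mod_cast this

theorem finrank_sup_singleton {m : ℕ} (W : Submodule ℚ (Fin m → ℚ)) (v : Fin m → ℚ) (hv : v ∉ W) :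
    Module.finrank ℚ (W ⊔ Submodule.span ℚ {v} : Submodule ℚ (Fin m → ℚ)) = Module.finrank ℚ W + 1 := by
  have h0 : v ≠ 0 := by rintro rfl; exact hv W.zero_mem
  have h1 := Submodule.finrank_sup_add_finrank_inf_eq W (Submodule.span ℚ {v})
  have h2 : W ⊓ Submodule.span ℚ {v} = ⊥ := by
    rw [← disjoint_iff, Submodule.disjoint_span_singleton' h0]
    exact hv
  rw [h2, finrank_bot, finrank_span_singleton h0] at h1
  simpa using h1

open Classical in
theorem marked_no_short {m : ℕ} (t : Fin m → ℕ) (Y : ℚ_[p] → Fin m → ℚ_[p]) (ε ρ : ℝ) (hερ : ε ≤ ρ) (hρ : ρ ≤ 1)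
    (x : ℚ_[p]) (hx : Marked p (psi p t Y) ε ρ ∅ x) (w : Fin m → ℤ) (hw0 : w ≠ 0)
    (hw : ‖Lf p (Y x) w‖ ≤ ((p : ℝ) ^ (∑ l, t l))⁻¹) : ε ≤ m * ‖wt p t w‖ := by
  obtain ⟨G, -, hG, hG1, hG2⟩ := hx
  have hcw0 : castQ w ≠ 0 := by
    intro h; apply hw0; ext l; have := congrFun h l; simpa [castQ] using this
  have hne : ((insert ⊥ G).filter fun W => castQ w ∉ W).Nonempty :=
    ⟨⊥, by simp [hcw0]⟩
  obtain ⟨W, hW⟩ := Finset.exists_maximal hne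
  have hWmem := Finset.mem_filter.mp hW.1
  set V := W ⊔ Submodule.span ℚ {castQ w} with hV
  have hwV : castQ w ∈ V := (le_sup_right : _ ≤ V) (Submodule.mem_span_singleton_self _)
  have hψW : psi p t Y W x ≤ 1 := by
    rcases Finset.mem_insert.mp hWmem.1 with h | h
    · apply psi_zero
      rw [h]; exact finrank_bot ℚ _
    · exact (hG1 W h (by simp)).2.le.trans hρ
  have hψV : psi p t Y V x ≤ m * ‖wt p t w‖ := by
    have := step' p (finrank_sup_singleton W _ hWmem.2) t W V (ub W) (ub V) (ub_spec W) (ub_spec V) w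
      hWmem.2 hwV le_sup_left (Y x) hw
    refine this.trans ?_
    have hd : (Module.finrank ℚ V : ℝ) ≤ m := by
      have := Submodule.finrank_le V
      rw [Module.finrank_fin_fun] at this
      exact_mod_cast this
    have h0 : 0 ≤ psi p t Y W x := mul_nonneg (aN_nonneg _) (zero_le_one.trans (le_max_left _ _))
    calc _ ≤ (m : ℝ) * ‖wt p t w‖ * 1 := mul_le_mul (by gcongr) hψW h0 (by positivity)
      _ = _ := mul_one _
  refine le_trans ?_ hψV
  by_cases hVG : V ∈ G
  · exact (hG1 V hVG (by simp)).1
  · refine hερ.trans (hG2 V ⟨hVG, ?_⟩)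
    apply hG.insert
    · intro Z hZ _
      have hcomp : Z ≤ W ∨ W ≤ Z := by
        rcases Finset.mem_insert.mp hWmem.1 with h | h
        · right; rw [h]; exact bot_le
        · exact hG.total hZ h
      by_cases hwZ : castQ w ∈ Z
      · left
        refine sup_le ?_ (by rwa [Submodule.span_singleton_le_iff_mem])
        rcases hcomp with h | h
        · exact absurd (h hwZ) hWmem.2
        · exact h
      · right
        refine le_trans ?_ le_sup_left
        rcases hcomp with h | h
        · exact h
        · exact hW.2 (Finset.mem_filter.mpr ⟨Finset.mem_insert_of_mem hZ, hwZ⟩) h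

theorem chain_card {m : ℕ} (G : Finset (Submodule ℚ (Fin m → ℚ))) (hG : IsChain (· ≤ ·) (G : Set (Submodule ℚ (Fin m → ℚ)))) :
    G.card ≤ m + 1 := by
  have := Finset.card_le_card_of_injOn (s := G) (t := Finset.range (m+1)) (fun W => Module.finrank ℚ W) (by
    intro W _
    have := Submodule.finrank_le W
    rw [Module.finrank_fin_fun] at this
    simp; omega) (by
    intro W hW V hV h
    rcases hG.total hW hV with h' | h'
    · exact Submodule.eq_of_le_of_finrank_eq h' h
    · exact (Submodule.eq_of_le_of_finrank_eq h' h.symm).symm)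
  simpa using this

theorem exists_rr_lt (δ : ℝ) (hδ : 0 < δ) : ∃ k, rr p k < δ := by
  unfold rr
  exact exists_pow_lt_of_lt_one hδ (inv_lt_one_of_one_lt₀ (one_lt_p' p))

theorem Lf_cont {m : ℕ} (Y : ℚ_[p] → Fin m → ℚ_[p]) (hY : ContinuousOn Y (closedBall 0 1)) (q : Fin m → ℤ) :
    ContinuousOn (fun x => Lf p (Y x) q) (closedBall 0 1) := by
  unfold Lf
  refine continuousOn_finsetSum _ fun l _ => ContinuousOn.fun_mul continuousOn_const ?_
  exact (continuous_apply l).comp_continuousOn hY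

theorem psi_cont {m : ℕ} (t : Fin m → ℕ) (Y : ℚ_[p] → Fin m → ℚ_[p]) (hY : ContinuousOn Y (closedBall 0 1))
    (W : Submodule ℚ (Fin m → ℚ)) (ρ : ℝ) (x : ℚ_[p]) (hx : ‖x‖ ≤ 1) (h : psi p t Y W x < ρ) :
    ∃ k, ∀ x' ∈ closedBall x (rr p k), psi p t Y W x' < ρ := by
  have hc : ContinuousOn (psi p t Y W) (closedBall 0 1) := by
    unfold psi bU
    refine ContinuousOn.fun_mul continuousOn_const (ContinuousOn.sup continuousOn_const (ContinuousOn.fun_mul continuousOn_const ?_))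
    refine ContinuousOn.norm ?_
    rw [continuousOn_pi]
    intro i
    exact Lf_cont p Y hY _
  have hop : closedBall (0 : ℚ_[p]) 1 ∈ nhds x :=
    (IsUltrametricDist.isOpen_closedBall (0 : ℚ_[p]) one_ne_zero).mem_nhds (by simpa using hx)
  have h1 := (hc.continuousAt hop).eventually (gt_mem_nhds h)
  obtain ⟨δ, hδ, hb⟩ := Metric.eventually_nhds_iff_ball.mp h1
  obtain ⟨k, hk⟩ := exists_rr_lt p δ hδ
  refine ⟨k, fun x' hx' => hb x' ?_⟩
  exact closedBall_subset_ball hk hx'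

theorem quant {m : ℕ} (hm : 1 ≤ m) (Y : ℚ_[p] → Fin m → ℚ_[p]) (hY : ContinuousOn Y (closedBall 0 1))
    (c : ℕ → Fin m → ℚ_[p]) (hc : Filter.Tendsto c Filter.atTop (nhds 0))
    (hs : ∀ x, ‖x‖ ≤ 1 → Filter.Tendsto (fun M => ∑ n ∈ Finset.range M, x ^ n • c n) Filter.atTop (nhds (Y x))) :
    ∃ (C : ℝ) (Nm : ℕ), 0 < C ∧ 1 ≤ Nm ∧ ∀ (t : Fin m → ℕ) (η : ℝ), 0 < η → η ≤ 1 →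
      (∀ q : Fin m → ℤ, q ≠ 0 → ‖Lf p (Y 0) q‖ ≤ ((p : ℝ) ^ (∑ l, t l))⁻¹ → η ≤ ‖wt p t q‖) →
      ∀ ε : ℝ, 0 < ε → ε ≤ (η / m) ^ m →
      lam p {x ∈ closedBall 0 1 | ∃ w : Fin m → ℤ, w ≠ 0 ∧ ‖Lf p (Y x) w‖ ≤ ((p : ℝ) ^ (∑ l, t l))⁻¹ ∧
        m * ‖wt p t w‖ < ε} ≤ ENNReal.ofReal (C * (ε / (η / m) ^ m) ^ ((1 : ℝ) / Nm)) := by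
  obtain ⟨Nm, hNm, hdeg⟩ := bounded_degree p c hc
  have hm0 : (0 : ℝ) < m := by exact_mod_cast hm
  have hp := p_pos' p
  refine ⟨((KK p (m + 1)).toReal + 1) * (Nm + 1), Nm, by positivity, hNm, ?_⟩
  intro t η hη0 hη1 H ε hε hερ
  set ρ := (η / m) ^ m with hρ
  have hρ0 : 0 < ρ := by positivity
  have hρ1 : ρ ≤ 1 := by
    apply pow_le_one₀ (by positivity)
    rw [div_le_one hm0]; exact hη1.trans (by exact_mod_cast hm)
  set θ := ENNReal.ofReal ((Nm + 1) * (ε / ρ) ^ ((1 : ℝ) / Nm)) with hθ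
  have hrr0 : rr p 0 = 1 := by simp [rr]
  have key := km p (psi p t Y) ε ρ θ (m + 1) chain_card ?_ (fun s x hx h => psi_cont p t Y hY s ρ x hx h)
    (m + 1) ∅ (by simp) (by simp) 0 0 (by simp) ?_
  · rw [hrr0, lam_unit, mul_one] at key
    calc _ ≤ lam p {x ∈ closedBall 0 1 | ¬ Marked p (psi p t Y) ε ρ ∅ x} := by
          apply measure_mono
          rintro x ⟨hx, w, hw0, hw1, hw2⟩
          refine ⟨hx, fun hM => ?_⟩
          exact absurd (marked_no_short p t Y ε ρ hερ hρ1 x hM w hw0 hw1) (not_le.mpr hw2)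
      _ ≤ _ := key
      _ ≤ ENNReal.ofReal ((KK p (m + 1)).toReal + 1) * θ := by
          gcongr
          rw [← ENNReal.ofReal_toReal (KK_ne_top p (m+1))]
          apply ENNReal.ofReal_le_ofReal
          rw [ENNReal.ofReal_toReal (KK_ne_top p (m+1))]
          linarith
      _ = _ := by
          rw [hθ, ← ENNReal.ofReal_mul (by positivity)]
          congr 1; ring
  · intro W a k ha ⟨z, hz, hzρ⟩
    set A := aU p t (ub W) with hA
    have hA0 : 0 ≤ A := aN_nonneg _
    rcases eq_or_lt_of_le hA0 with h | hApos
    · exfalso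
      unfold psi at hzρ
      rw [← hA, ← h, zero_mul] at hzρ
      linarith
    by_cases hAε : ε ≤ A
    · have : {x ∈ closedBall a (rr p k) | psi p t Y W x < ε} = ∅ := by
        rw [Set.eq_empty_iff_forall_notMem]
        rintro x ⟨-, hx⟩
        have hb : 1 ≤ bU p t (ub W) (Y x) := le_max_left _ _
        have : A * 1 ≤ psi p t Y W x := by unfold psi; rw [← hA]; gcongr
        linarith
      rw [this]; simp
    · push Not at hAε
      set PT := (p : ℝ) ^ (∑ l, t l) with hPT
      have hPT0 : 0 < PT := by positivity
      have hAP : 0 < A * PT := by positivity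
      obtain ⟨i, hi⟩ : ∃ i, ρ ≤ A * PT * ‖Lf p (Y z) (ub W i)‖ := by
        by_contra hcon
        push Not at hcon
        have h1 : ‖fun i => Lf p (Y z) (ub W i)‖ < ρ / (A * PT) := by
          rw [pi_norm_lt_iff (by positivity)]
          intro i
          rw [lt_div_iff₀ hAP, mul_comm]
          exact hcon i
        have h2 : psi p t Y W z < ρ := by
          unfold psi bU
          rw [← hA, ← hPT, mul_max_of_nonneg _ _ hA0]
          apply max_lt (by linarith)
          rw [lt_div_iff₀ hAP] at h1
          linarith
        linarith
      have hcz := hdeg (fun l => (ub W i l : ℚ_[p]))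
      have hser : ∀ x, ‖x‖ ≤ 1 → Filter.Tendsto (fun M => ∑ n ∈ Finset.range M, (∑ l, (ub W i l : ℚ_[p]) * c n l) * x ^ n)
          Filter.atTop (nhds (Lf p (Y x) (ub W i))) := by
        intro x hx
        have h1 := hs x hx
        have h2 : Continuous fun y : Fin m → ℚ_[p] => Lf p y (ub W i) := by
          unfold Lf; fun_prop
        have h3 := (h2.tendsto (Y x)).comp h1
        refine h3.congr fun M => ?_
        simp only [Function.comp, Lf, Finset.sum_apply, Pi.smul_apply, smul_eq_mul, Finset.mul_sum, Finset.sum_mul]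
        rw [Finset.sum_comm]
        refine Finset.sum_congr rfl fun n _ => Finset.sum_congr rfl fun l _ => ?_
        ring
      have hz1 : ‖z‖ ≤ 1 := by
        rw [mem_closedBall, dist_eq_norm] at hz
        have : z = (z - a) + a := by ring
        rw [this]
        exact (IsUltrametricDist.norm_add_le_max _ _).trans (max_le (hz.trans (rr_le_one p k)) ha)
      rcases hcz with h0 | ⟨N, hN, hNdom⟩
      · exfalso
        have h1 := hser z hz1
        simp only [h0, zero_mul, Finset.sum_const_zero] at h1
        have h2 := tendsto_nhds_unique h1 tendsto_const_nhds
        rw [h2, norm_zero, mul_zero] at hi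
        linarith
      · have hg := good_measure p Nm N hNm hN _ (fun x => Lf p (Y x) (ub W i)) hser hNdom a ha k
          (ε / (A * PT)) (ρ / (A * PT)) (by positivity) (by gcongr) z hz (by
            rw [div_le_iff₀ hAP, mul_comm]; exact hi)
        have hratio : (ε / (A * PT)) / (ρ / (A * PT)) = ε / ρ := by field_simp
        rw [hratio] at hg
        refine le_trans (measure_mono ?_) hg
        rintro x ⟨hx, hxε⟩
        refine ⟨hx, ?_⟩
        rw [lt_div_iff₀ hAP]
        refine lt_of_le_of_lt ?_ hxε
        unfold psi bU
        rw [← hA, ← hPT]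
        calc _ ≤ A * (PT * ‖fun i => Lf p (Y x) (ub W i)‖) := by
              rw [mul_comm, mul_assoc]
              gcongr
              exact norm_le_pi_norm (fun i => Lf p (Y x) (ub W i)) i
          _ ≤ _ := by gcongr; exact le_max_right _ _
  · intro W _
    refine ⟨0, by simp [hrr0], ?_⟩
    have hd := Submodule.finrank_le W
    rw [Module.finrank_fin_fun] at hd
    exact lower_bound p hm hd t (ub W) (ub_spec W).1 (Y 0) η hη0 hη1 H

noncomputable def piP {m : ℕ} (q : Fin m → ℤ) : ℝ := ∏ i, (if q i = 0 then (1:ℝ) else |((q i : ℤ) : ℝ)|)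

noncomputable def ext1 {n : ℕ} (y : Fin n → ℚ_[p]) : Fin (n+1) → ℚ_[p] := Fin.cons 1 y

noncomputable def VW {m : ℕ} (y : Fin m → ℚ_[p]) (ε : ℝ) : Set (Fin m → ℤ) :=
  {q | ‖Lf p y q‖ ≤ (piP q) ^ (-(1+ε))}

def Short {m : ℕ} (y : Fin m → ℚ_[p]) (γ : ℝ) (t : Fin m → ℕ) : Prop :=
  ∃ q : Fin m → ℤ, q ≠ 0 ∧ ‖Lf p y q‖ ≤ ((p:ℝ)^(∑ l, t l))⁻¹ ∧
    ‖wt p t q‖ ≤ (p:ℝ) ^ (-(γ * ((∑ l, t l : ℕ) : ℝ)))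

lemma isVWMA_iff {n : ℕ} (y : Fin n → ℚ_[p]) :
    IsVWMA p y ↔ ∃ ε > 0, (VW p (ext1 p y) ε).Infinite := by
  unfold IsVWMA
  refine exists_congr fun ε => and_congr_right fun _ => ?_
  let e : ℤ × (Fin n → ℤ) ≃ (Fin (n+1) → ℤ) := Fin.consEquiv (fun _ => ℤ)
  have h2 : VW p (ext1 p y) ε = e '' {qq : ℤ × (Fin n → ℤ) | ‖(qq.1:ℚ_[p]) + ∑ i, (qq.2 i : ℚ_[p]) * y i‖ ≤ (piPlusZ qq.1 qq.2)^(-(1+ε))} := by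
    ext q
    rw [Equiv.image_eq_preimage_symm]
    have hq : q = e (e.symm q) := (e.apply_symm_apply q).symm
    generalize e.symm q = r at hq
    have hes : e.symm q = r := by rw [hq]; simp
    obtain ⟨a, b⟩ := r
    have hq' : q = Fin.cons a b := hq
    rw [Set.mem_preimage, hes]
    simp only [VW, Set.mem_ofPred_eq, Lf, ext1, piP, piPlusZ, hq', Fin.sum_univ_succ, Fin.prod_univ_succ, Fin.cons_zero, Fin.cons_succ, mul_one]
  rw [h2, Set.infinite_image_iff e.injective.injOn]

lemma one_le_fac (z : ℤ) : (1:ℝ) ≤ (if z = 0 then (1:ℝ) else |(z : ℝ)|) := by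
  split_ifs with h
  · exact le_rfl
  · exact_mod_cast Int.one_le_abs h

lemma abs_le_fac (z : ℤ) : |(z:ℝ)| ≤ (if z = 0 then (1:ℝ) else |(z : ℝ)|) := by
  split_ifs with h
  · simp [h]
  · exact le_rfl

lemma fac_le_piP {m : ℕ} (q : Fin m → ℤ) (i : Fin m) :
    (if q i = 0 then (1:ℝ) else |((q i : ℤ) : ℝ)|) ≤ piP q := by
  unfold piP
  rw [← Finset.mul_prod_erase _ _ (Finset.mem_univ i)]
  refine le_mul_of_one_le_right (by linarith [one_le_fac (q i)]) ?_
  have : ∏ j ∈ Finset.univ.erase i, (1:ℝ) ≤ ∏ j ∈ Finset.univ.erase i, (if q j = 0 then (1:ℝ) else |((q j : ℤ) : ℝ)|) :=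
    Finset.prod_le_prod (fun _ _ => zero_le_one) (fun j _ => one_le_fac (q j))
  simpa using this

lemma one_le_piP {m : ℕ} (q : Fin m → ℤ) : 1 ≤ piP q := by
  have : ∏ j : Fin m, (1:ℝ) ≤ piP q :=
    Finset.prod_le_prod (fun _ _ => zero_le_one) (fun j _ => one_le_fac (q j))
  simpa using this

lemma finite_piP_le {m : ℕ} (B : ℝ) : {q : Fin m → ℤ | piP q ≤ B}.Finite := by
  refine (Set.finite_Icc (fun _ : Fin m => -⌈B⌉) (fun _ => ⌈B⌉)).subset fun q hq => ?_
  have h : ∀ i, |q i| ≤ ⌈B⌉ := fun i => by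
    have : |((q i:ℤ):ℝ)| ≤ B := (abs_le_fac _).trans ((fac_le_piP q i).trans hq)
    have h2 := this.trans (Int.le_ceil B)
    exact_mod_cast h2
  exact ⟨fun i => (abs_le.1 (h i)).1, fun i => (abs_le.1 (h i)).2⟩

lemma finite_sum_le {m : ℕ} (B : ℕ) : {t : Fin m → ℕ | ∑ l, t l ≤ B}.Finite := by
  refine (Set.finite_Iic (fun _ : Fin m => B)).subset fun t ht i => ?_
  exact (Finset.single_le_sum (fun _ _ => Nat.zero_le _) (Finset.mem_univ i)).trans ht

lemma norm_wt_le_iff {m : ℕ} (t : Fin m → ℕ) (q : Fin m → ℤ) {r : ℝ} (hr : 0 ≤ r) :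
    ‖wt p t q‖ ≤ r ↔ ∀ i, |((q i:ℤ):ℝ)| ≤ r * (p:ℝ)^(t i) := by
  rw [pi_norm_le_iff_of_nonneg hr]
  refine forall_congr' fun i => ?_
  have h0 : (0:ℝ) < (p:ℝ)^(t i) := pow_pos (p_pos' p) _
  simp only [wt, wtd, Real.norm_eq_abs, abs_mul, abs_inv, abs_of_pos h0]
  rw [← div_eq_mul_inv, div_le_iff₀ h0]

lemma vwma_short {m : ℕ} (y : Fin m → ℚ_[p]) (ε : ℝ) (hε : 0 < ε) (hV : (VW p y ε).Infinite) :
    ∃ k : ℕ, {t | Short p y (1/((k:ℝ)+1)) t}.Infinite := by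
  have hp := one_lt_p' p
  have hp0 := p_pos' p
  set δ : ℝ := ε / (2 * (m+1)) with hδ
  have hδ0 : 0 < δ := by positivity
  obtain ⟨k, hk⟩ := exists_nat_one_div_lt (show 0 < δ/(1+ε) by positivity)
  refine ⟨k, fun hfin => ?_⟩
  obtain ⟨B, hB⟩ : ∃ B : ℕ, ∀ t, Short p y (1/((k:ℝ)+1)) t → ∑ l, t l ≤ B := by
    obtain ⟨B, hB⟩ := (hfin.image (fun t => ∑ l, t l)).bddAbove
    exact ⟨B, fun t ht => hB ⟨t, ht, rfl⟩⟩
  refine hV ((finite_piP_le (m := m) ((p:ℝ)^(max (2*(m+1)/ε) (B:ℝ)))).subset fun q hq => ?_)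
  by_contra hcon
  simp only [Set.mem_ofPred_eq, not_le] at hcon
  set P := Real.logb p (piP q) with hP
  have hpi : 0 < piP q := by linarith [one_le_piP q]
  have hPp : (p:ℝ)^P = piP q := Real.rpow_logb hp0 hp.ne' hpi
  have hPgt : max (2*(m+1)/ε) (B:ℝ) < P := by
    rw [← hPp] at hcon
    exact (Real.rpow_lt_rpow_left_iff hp).1 hcon
  have hP1 := (le_max_left _ _).trans_lt hPgt
  have hP2 := (le_max_right _ _).trans_lt hPgt
  have hP0 : 0 < P := lt_trans (by positivity) hP1
  let fac : Fin m → ℝ := fun i => (if q i = 0 then (1:ℝ) else |((q i : ℤ) : ℝ)|)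
  have hfac : ∀ i, 1 ≤ fac i := fun i => one_le_fac _
  let a : Fin m → ℝ := fun i => Real.logb p (fac i)
  have ha0 : ∀ i, 0 ≤ a i := fun i => Real.logb_nonneg hp (hfac i)
  have hap : ∀ i, (p:ℝ)^(a i) = fac i := fun i => Real.rpow_logb hp0 hp.ne' (by linarith [hfac i])
  have hsa : ∑ i, a i = P := by
    have : (p:ℝ)^(∑ i, a i) = (p:ℝ)^P := by
      rw [hPp, Real.rpow_sum_of_pos hp0]
      exact Finset.prod_congr rfl fun i _ => hap i
    exact (Real.rpow_right_inj hp0 hp.ne').1 this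
  let t : Fin m → ℕ := fun i => ⌈a i + δ * P⌉₊
  have ht1 : ∀ i, a i + δ * P ≤ t i := fun i => Nat.le_ceil _
  have ht2 : ∀ i, (t i : ℝ) ≤ a i + δ * P + 1 := fun i =>
    (Nat.ceil_lt_add_one (by have := ha0 i; positivity)).le
  have hT1 : P ≤ ((∑ l, t l : ℕ):ℝ) := by
    push_cast
    rw [← hsa]
    exact Finset.sum_le_sum fun i _ => by nlinarith [ht1 i, mul_pos hδ0 hP0]
  have hT2 : ((∑ l, t l : ℕ):ℝ) ≤ (1+ε) * P := by
    push_cast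
    have h1 : ∑ l, (t l:ℝ) ≤ ∑ l, (a l + δ * P + 1) := Finset.sum_le_sum fun i _ => ht2 i
    rw [Finset.sum_add_distrib, Finset.sum_add_distrib, hsa] at h1
    simp only [Finset.sum_const, Finset.card_univ, Fintype.card_fin, nsmul_eq_mul, mul_one] at h1
    have h2 : (m:ℝ) * (δ * P) ≤ ε/2 * P := by
      have : (m:ℝ) * δ ≤ ε/2 := by
        rw [hδ, mul_div_assoc', div_le_div_iff₀ (by positivity) (by positivity)]
        nlinarith
      nlinarith
    have h3 : (m:ℝ) ≤ ε/2 * P := by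
      rw [div_lt_iff₀ hε] at hP1
      nlinarith
    linarith
  have hS : Short p y (1/((k:ℝ)+1)) t := by
    refine ⟨q, ?_, ?_, ?_⟩
    · rintro rfl
      have : piP (0 : Fin m → ℤ) = 1 := by simp [piP]
      rw [hP, this] at hP0
      simp at hP0
    · refine le_trans hq ?_
      rw [← hPp, ← Real.rpow_mul hp0.le, ← Real.rpow_natCast, ← Real.rpow_neg hp0.le]
      exact Real.rpow_le_rpow_of_exponent_le hp.le (by linarith)
    · rw [norm_wt_le_iff p t q (Real.rpow_nonneg hp0.le _)]
      intro i
      refine (abs_le_fac (q i)).trans ?_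
      change fac i ≤ _
      rw [← hap i, ← Real.rpow_natCast, ← Real.rpow_add hp0]
      refine Real.rpow_le_rpow_of_exponent_le hp.le ?_
      have : 1/((k:ℝ)+1) * ((∑ l, t l : ℕ):ℝ) ≤ δ * P := by
        calc 1/((k:ℝ)+1) * ((∑ l, t l : ℕ):ℝ) ≤ δ/(1+ε) * ((1+ε) * P) := by gcongr
          _ = δ * P := by field_simp
      linarith [ht1 i]
  have := hB t hS
  have h4 : ((∑ l, t l : ℕ):ℝ) ≤ B := by exact_mod_cast this
  linarith

lemma short_mem_VW {m : ℕ} (y : Fin m → ℚ_[p]) (γ : ℝ) (hγ : 0 < γ) (t : Fin m → ℕ) (q : Fin m → ℤ) (hq : q ≠ 0)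
    (h1 : ‖Lf p y q‖ ≤ ((p:ℝ)^(∑ l, t l))⁻¹) (h2 : ‖wt p t q‖ ≤ (p:ℝ) ^ (-(γ * ((∑ l, t l : ℕ) : ℝ)))) :
    q ∈ VW p y γ := by
  have hp := one_lt_p' p
  have hp0 := p_pos' p
  refine h1.trans ?_
  set T : ℕ := ∑ l, t l with hT
  rw [norm_wt_le_iff p t q (Real.rpow_nonneg hp0.le _)] at h2
  obtain ⟨i, hi⟩ : ∃ i, q i ≠ 0 := by
    by_contra h; push Not at h; exact hq (funext h)
  have hle1 : (p:ℝ) ^ (-(γ * (T:ℝ))) ≤ 1 := Real.rpow_le_one_of_one_le_of_nonpos hp.le (by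
    have : 0 ≤ γ * (T:ℝ) := by positivity
    linarith)
  have hf : ∀ j, (if q j = 0 then (1:ℝ) else |((q j : ℤ) : ℝ)|) ≤ (p:ℝ)^(t j) := fun j => by
    split_ifs with h
    · exact one_le_pow₀ hp.le
    · exact (h2 j).trans (mul_le_of_le_one_left (by positivity) hle1)
  have hPi : piP q ≤ (p:ℝ) ^ ((1-γ) * (T:ℝ)) := by
    have e1 : (p:ℝ) ^ ((1-γ) * (T:ℝ)) = (p:ℝ) ^ (-(γ * (T:ℝ))) * ∏ j, (p:ℝ)^(t j) := by
      rw [Finset.prod_pow_eq_pow_sum, ← hT, ← Real.rpow_natCast, ← Real.rpow_add hp0]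
      congr 1; ring
    rw [e1]
    unfold piP
    rw [← Finset.mul_prod_erase _ _ (Finset.mem_univ i), ← Finset.mul_prod_erase _ (fun j => (p:ℝ)^(t j)) (Finset.mem_univ i), ← mul_assoc]
    refine mul_le_mul ?_ ?_ ?_ ?_
    · rw [if_neg hi]; exact h2 i
    · exact Finset.prod_le_prod (fun j _ => by linarith [one_le_fac (q j)]) (fun j _ => hf j)
    · exact Finset.prod_nonneg (fun j _ => by linarith [one_le_fac (q j)])
    · positivity
  have hpi : 0 < piP q := by linarith [one_le_piP q]
  rw [Real.rpow_neg hpi.le]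
  refine inv_anti₀ (Real.rpow_pos_of_pos hpi _) ?_
  calc piP q ^ (1+γ) ≤ ((p:ℝ) ^ ((1-γ) * (T:ℝ))) ^ (1+γ) := Real.rpow_le_rpow hpi.le hPi (by linarith)
    _ = (p:ℝ) ^ ((1-γ) * (T:ℝ) * (1+γ)) := (Real.rpow_mul hp0.le _ _).symm
    _ ≤ (p:ℝ) ^ (T:ℝ) := Real.rpow_le_rpow_of_exponent_le hp.le (by
          have : 0 ≤ γ * γ * (T:ℝ) := by positivity
          nlinarith)
    _ = (p:ℝ) ^ T := Real.rpow_natCast _ _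

lemma short_finite {m : ℕ} (y : Fin m → ℚ_[p]) (γ : ℝ) (hγ : 0 < γ) (hV : (VW p y γ).Finite) :
    {t | Short p y γ t}.Finite := by
  have hp := one_lt_p' p
  have hp0 := p_pos' p
  have hne : ∀ q : Fin m → ℤ, q ≠ 0 → Lf p y q ≠ 0 := by
    intro q hq h0
    refine Set.infinite_range_of_injective (f := fun k : ℕ => ((k:ℤ) • q)) ?_ (hV.subset ?_)
    · intro a b hab
      obtain ⟨i, hi⟩ : ∃ i, q i ≠ 0 := by
        by_contra h; push Not at h; exact hq (funext h)
      have := congrFun hab i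
      simpa [hi] using this
    · rintro _ ⟨k, rfl⟩
      have : Lf p y ((k:ℤ) • q) = (k:ℚ_[p]) * Lf p y q := by
        simp [Lf, Finset.mul_sum, mul_assoc]
      simp only [VW, Set.mem_ofPred_eq, this, h0, mul_zero, norm_zero]
      exact Real.rpow_nonneg (by linarith [one_le_piP ((k:ℤ) • q)]) _
  have hB : ∃ B : ℕ, ∀ q ∈ VW p y γ, q ≠ 0 → ‖Lf p y q‖⁻¹ ≤ B := by
    obtain ⟨B, hB⟩ := (hV.image (fun q => ‖Lf p y q‖⁻¹)).bddAbove
    obtain ⟨N, hN⟩ := exists_nat_ge B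
    exact ⟨N, fun q hq _ => (hB ⟨q, hq, rfl⟩).trans hN⟩
  obtain ⟨B, hB⟩ := hB
  refine (finite_sum_le (m := m) B).subset ?_
  rintro t ⟨q, hq, h1, h2⟩
  have h3 := hB q (short_mem_VW p y γ hγ t q hq h1 h2) hq
  have h4 : (p:ℝ)^(∑ l, t l) ≤ B := by
    refine le_trans ?_ h3
    rw [le_inv_comm₀ (by positivity) (norm_pos_iff.2 (hne q hq))]
    exact h1
  have h5 : p^(∑ l, t l) ≤ B := by exact_mod_cast h4
  exact (Nat.lt_pow_self (by exact_mod_cast hp)).le.trans h5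


lemma tsum_pi_pow (r : ℝ≥0∞) (m : ℕ) :
    ∑' t : Fin m → ℕ, r ^ (∑ l, t l) = (∑' k : ℕ, r ^ k) ^ m := by
  induction m with
  | zero => simp
  | succ m ih =>
    rw [← (Fin.consEquiv (fun _ : Fin (m+1) => ℕ)).tsum_eq]
    have : ∀ c : ℕ × (Fin m → ℕ), r ^ (∑ l, (Fin.consEquiv (fun _ : Fin (m+1) => ℕ)) c l) = r ^ c.1 * r ^ (∑ l, c.2 l) := by
      rintro ⟨a, b⟩
      simp [Fin.sum_univ_succ, pow_add]
    simp_rw [this]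
    rw [ENNReal.tsum_prod (f := fun a (b : Fin m → ℕ) => r ^ a * r ^ (∑ l, b l))]
    simp_rw [ENNReal.tsum_mul_left, ih, ENNReal.tsum_mul_right]
    rw [pow_succ, mul_comm]

lemma tsum_fin (K r : ℝ) (hK : 0 ≤ K) (hr : 0 ≤ r) (hr1 : r < 1) (m : ℕ) :
    ∑' t : Fin m → ℕ, ENNReal.ofReal (K * r ^ (∑ l, t l)) ≠ ∞ := by
  simp_rw [ENNReal.ofReal_mul hK, ENNReal.ofReal_pow hr]
  rw [ENNReal.tsum_mul_left, tsum_pi_pow, ENNReal.tsum_geometric]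
  refine ENNReal.mul_ne_top ENNReal.ofReal_ne_top (ENNReal.pow_ne_top ?_)
  rw [Ne, ENNReal.inv_eq_top, tsub_eq_zero_iff_le, not_le]
  simpa using hr1

theorem ae_short {m : ℕ} (hm : 1 ≤ m) (Y : ℚ_[p] → Fin m → ℚ_[p]) (hY : ContinuousOn Y (closedBall 0 1))
    (c : ℕ → Fin m → ℚ_[p]) (hc : Filter.Tendsto c Filter.atTop (nhds 0))
    (hs : ∀ x, ‖x‖ ≤ 1 → Filter.Tendsto (fun M => ∑ n ∈ Finset.range M, x ^ n • c n) Filter.atTop (nhds (Y x)))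
    (hV : ∀ ε > 0, (VW p (Y 0) ε).Finite) (γ : ℝ) (hγ : 0 < γ) :
    lam p {x ∈ closedBall 0 1 | {t | Short p (Y x) γ t}.Infinite} = 0 := by
  have hp := one_lt_p' p
  have hp0 := p_pos' p
  obtain ⟨C, N, hC, hN, H⟩ := quant p hm Y hY c hc hs
  have hm0 : (0:ℝ) < m := by exact_mod_cast hm
  have hN0 : (0:ℝ) < N := by exact_mod_cast hN
  set γ0 : ℝ := γ/(2*m) with hγ0
  have hγ00 : 0 < γ0 := by positivity
  have hF := short_finite p (Y 0) γ0 hγ00 (hV γ0 hγ00)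
  set F := {t | Short p (Y 0) γ0 t} with hFd
  classical
  let A : (Fin m → ℕ) → Set ℚ_[p] := fun t => if t ∈ F then ∅ else {x ∈ closedBall 0 1 | Short p (Y x) γ t}
  set r : ℝ := (p:ℝ)^(-(γ/2)*((1:ℝ)/N)) with hr
  have hr0 : 0 < r := Real.rpow_pos_of_pos hp0 _
  have hr1 : r < 1 := Real.rpow_lt_one_of_one_lt_of_neg hp (by
    have : 0 < (γ/2)*((1:ℝ)/N) := by positivity
    linarith)
  set K : ℝ := (C+1) * ((2*m*(m:ℝ)^m)^((1:ℝ)/N)) with hK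
  have hK0 : 0 ≤ K := by positivity
  have hA : ∀ t, lam p (A t) ≤ ENNReal.ofReal (K * r ^ (∑ l, t l)) := by
    intro t
    by_cases ht : t ∈ F
    · simp [A, ht]
    simp only [A, if_neg ht]
    set T : ℕ := ∑ l, t l with hT
    set η : ℝ := (p:ℝ)^(-(γ0 * (T:ℝ))) with hη
    have hη0 : 0 < η := Real.rpow_pos_of_pos hp0 _
    have hη1 : η ≤ 1 := Real.rpow_le_one_of_one_le_of_nonpos hp.le (by
      have : 0 ≤ γ0 * (T:ℝ) := by positivity
      linarith)
    set s : ℝ := (p:ℝ)^(-(γ * (T:ℝ))) with hs'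
    have hs0 : 0 < s := Real.rpow_pos_of_pos hp0 _
    set ρ : ℝ := (η/m)^m with hρ
    have hρ0 : 0 < ρ := by positivity
    have hratio : (2*m*s)/ρ = 2*m*(m:ℝ)^m * (p:ℝ)^(-(γ/2)*(T:ℝ)) := by
      have h1 : η^m = (p:ℝ)^(-(γ/2)*(T:ℝ)) := by
        rw [hη, ← Real.rpow_natCast, ← Real.rpow_mul hp0.le]
        congr 1
        rw [hγ0]; field_simp
      have h2 : s = (p:ℝ)^(-(γ/2)*(T:ℝ)) * (p:ℝ)^(-(γ/2)*(T:ℝ)) := by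
        rw [hs', ← Real.rpow_add hp0]; congr 1; ring
      have h3 : (p:ℝ)^(-(γ/2)*(T:ℝ)) ≠ 0 := (Real.rpow_pos_of_pos hp0 _).ne'
      rw [hρ, div_pow, h1, h2]
      field_simp
    have hfin : ((2*m*s)/ρ)^((1:ℝ)/N) = (2*m*(m:ℝ)^m)^((1:ℝ)/N) * r^T := by
      rw [hratio, Real.mul_rpow (by positivity) (by positivity)]
      congr 1
      rw [hr, ← Real.rpow_natCast, ← Real.rpow_mul hp0.le, ← Real.rpow_mul hp0.le]
      congr 1; ring
    have hpos : 0 < ((2*m*s)/ρ)^((1:ℝ)/N) := Real.rpow_pos_of_pos (by positivity) _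
    have hKr : K * r^T = (C+1) * ((2*m*s)/ρ)^((1:ℝ)/N) := by rw [hfin, hK]; ring
    rw [hKr]
    by_cases hc : 2*m*s ≤ ρ
    · have h1 := H t η hη0 hη1 (fun q hq hl => by
        by_contra hcon
        push Not at hcon
        exact ht ⟨q, hq, hl, hcon.le⟩) (2*m*s) (by positivity) hc
      refine le_trans (measure_mono ?_) (h1.trans (ENNReal.ofReal_le_ofReal (by nlinarith)))
      rintro x ⟨hx, q, hq, hl, hw⟩
      refine ⟨hx, q, hq, hl, ?_⟩
      calc (m:ℝ) * ‖wt p t q‖ ≤ m * s := by gcongr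
        _ < 2*m*s := by nlinarith [mul_pos hm0 hs0]
    · push Not at hc
      refine (measure_mono (Set.sep_subset _ _)).trans ?_
      rw [lam_unit, ← ENNReal.ofReal_one]
      refine ENNReal.ofReal_le_ofReal ?_
      have : 1 ≤ ((2*m*s)/ρ)^((1:ℝ)/N) := Real.one_le_rpow ((one_le_div hρ0).2 hc.le) (by positivity)
      nlinarith
  have hsum : ∑' t, lam p (A t) ≠ ∞ :=
    ne_top_of_le_ne_top (tsum_fin K r hK0 hr0.le hr1 m) (ENNReal.tsum_le_tsum hA)
  have h0 := measure_limsup_cofinite_eq_zero hsum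
  rw [Filter.cofinite.limsup_set_eq] at h0
  refine measure_mono_null ?_ h0
  rintro x ⟨hx, hinf⟩
  refine (hinf.sdiff hF).mono ?_
  rintro t ⟨ht, htF⟩
  have htF' : t ∉ F := htF
  simp only [Set.mem_ofPred_eq, A, if_neg htF']
  exact ⟨hx, ht⟩

theorem oneD {n : ℕ} (h : ℚ_[p] → Fin n → ℚ_[p]) (hh : ContinuousOn h (closedBall 0 1))
    (c : ℕ → Fin n → ℚ_[p]) (hc : Filter.Tendsto c Filter.atTop (nhds 0))
    (hs : ∀ x, ‖x‖ ≤ 1 → Filter.Tendsto (fun M => ∑ n ∈ Finset.range M, x ^ n • c n) Filter.atTop (nhds (h x)))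
    (h0 : ¬ IsVWMA p (h 0)) :
    lam p {x ∈ closedBall 0 1 | IsVWMA p (h x)} = 0 := by
  have key : ∀ k : ℕ, lam p {x ∈ closedBall 0 1 | {t | Short p (ext1 p (h x)) (1/((k:ℝ)+1)) t}.Infinite} = 0 := by
    intro k
    refine ae_short p (m := n+1) (by omega) (fun x => ext1 p (h x)) ?_
      (fun j => Fin.cons (if j = 0 then 1 else 0) (c j)) ?_ ?_ ?_ _ (by positivity)
    · refine continuousOn_pi.2 fun i => ?_
      refine Fin.cases ?_ (fun i => ?_) i
      · simpa [ext1] using continuousOn_const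
      · simpa [ext1] using continuousOn_pi.1 hh i
    · refine tendsto_pi_nhds.2 fun i => ?_
      refine Fin.cases ?_ (fun i => ?_) i
      · simp only [Fin.cons_zero, Pi.zero_apply]
        refine tendsto_const_nhds.congr' ?_
        filter_upwards [Filter.eventually_gt_atTop 0] with j hj
        rw [if_neg hj.ne']
      · simpa using (tendsto_pi_nhds.1 hc) i
    · intro x hx
      refine tendsto_pi_nhds.2 fun i => ?_
      refine Fin.cases ?_ (fun i => ?_) i
      · simp only [ext1, Fin.cons_zero, Finset.sum_apply, Pi.smul_apply, smul_eq_mul]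
        refine tendsto_const_nhds.congr' ?_
        filter_upwards [Filter.eventually_gt_atTop 0] with j hj
        rw [Finset.sum_eq_single 0]
        · simp
        · intro b _ hb; simp [hb]
        · intro hb; simp at hb; omega
      · have := (tendsto_pi_nhds.1 (hs x hx)) i
        simpa [ext1] using this
    · intro ε hε
      by_contra hcon
      exact h0 ((isVWMA_iff p _).2 ⟨ε, hε, hcon⟩)
  refine measure_mono_null ?_ (measure_iUnion_null key)
  rintro x ⟨hx, hv⟩
  obtain ⟨ε, hε, hinf⟩ := (isVWMA_iff p _).1 hv
  obtain ⟨k, hk⟩ := vwma_short p _ ε hε hinf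
  exact Set.mem_iUnion.2 ⟨k, hx, hk⟩


lemma ae_line {d : ℕ} (μ : Measure (Fin d → ℚ_[p])) [μ.IsAddHaarMeasure] (x0 : Fin d → ℚ_[p])
    (N : Set (Fin d → ℚ_[p])) (hN : MeasurableSet N) (h0 : μ N = 0) :
    ∀ᵐ v ∂μ, ∀ᵐ z ∂(lam p), x0 + z • v ∉ N := by
  have hmeas : MeasurableSet {x : ℚ_[p] × (Fin d → ℚ_[p]) | x0 + x.1 • x.2 ∉ N} := by
    have hf : Measurable (fun x : ℚ_[p] × (Fin d → ℚ_[p]) => x0 + x.1 • x.2) := by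
      refine measurable_pi_iff.2 fun i => ?_
      have : Continuous (fun x : ℚ_[p] × (Fin d → ℚ_[p]) => (x0 + x.1 • x.2) i) := by
        simp only [Pi.add_apply, Pi.smul_apply]; fun_prop
      exact this.measurable
    exact hf hN.compl
  rw [← Measure.ae_ae_comm (p := fun (z : ℚ_[p]) (v : Fin d → ℚ_[p]) => x0 + z • v ∉ N) hmeas]
  have hz : ∀ᵐ z ∂(lam p), z ≠ 0 := by
    rw [ae_iff]
    simp
  filter_upwards [hz] with z hz
  have hN' : μ ((fun w => x0 + w) ⁻¹' N) = 0 := by rw [measure_preimage_add, h0]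
  let e : (Fin d → ℚ_[p]) ≃L[ℚ_[p]] (Fin d → ℚ_[p]) := ContinuousLinearEquiv.smulLeft (Units.mk0 z hz)
  have hac : μ.map e ≪ μ := Measure.absolutelyContinuous_isAddHaarMeasure _ _
  have h1 := hac hN'
  rw [Measure.map_apply e.continuous.measurable (measurable_const_add x0 hN)] at h1
  rw [ae_iff]
  convert h1 using 2
  ext v
  simp [e]

theorem main_pos (n d : ℕ) (U : Set (Fin d → ℚ_[p])) (f : (Fin d → ℚ_[p]) → (Fin n → ℚ_[p]))
    (hU : IsOpen U) (hf : AnalyticOnNhd ℚ_[p] f U) (x0 : Fin d → ℚ_[p]) (hx0 : x0 ∈ U)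
    (hw : ¬ IsVWMA p (f x0)) (μ : Measure (Fin d → ℚ_[p])) [μ.IsAddHaarMeasure] :
    0 < μ {x ∈ U | ¬ IsVWMA p (f x)} := by
  by_contra hcon
  have hnull : μ {x ∈ U | ¬ IsVWMA p (f x)} = 0 := by simpa using hcon
  have hN := ae_line p μ x0 (toMeasurable μ _) (measurableSet_toMeasurable _ _) ((measure_toMeasurable _).trans hnull)
  obtain ⟨P, r, hP⟩ := hf x0 hx0
  obtain ⟨R, hR0, hRU⟩ := Metric.isOpen_iff.1 hU x0 hx0
  have hpos : 0 < min r (ENNReal.ofReal R) := lt_min hP.r_pos (by simpa using hR0)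
  have hball : 0 < μ (Metric.eball 0 (min r (ENNReal.ofReal R))) :=
    Metric.isOpen_eball.measure_pos μ ⟨0, Metric.mem_eball_self hpos⟩
  obtain ⟨v, hvb, hv⟩ : ∃ v ∈ Metric.eball (0 : Fin d → ℚ_[p]) (min r (ENNReal.ofReal R)),
      ∀ᵐ z ∂(lam p), x0 + z • v ∉ toMeasurable μ {x ∈ U | ¬ IsVWMA p (f x)} := by
    by_contra hc
    push Not at hc
    refine hball.ne' (measure_mono_null ?_ (ae_iff.1 hN))
    intro v hv
    exact hc v hv
  have hzv : ∀ z : ℚ_[p], ‖z‖ ≤ 1 → z • v ∈ Metric.eball (0 : Fin d → ℚ_[p]) (min r (ENNReal.ofReal R)) := by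
    intro z hz
    rw [Metric.mem_eball, edist_zero_right] at hvb ⊢
    refine lt_of_le_of_lt ?_ hvb
    rw [enorm_smul]
    refine mul_le_of_le_one_left' ?_
    rw [← ofReal_norm]
    exact ENNReal.ofReal_le_one.2 hz
  have hr : ∀ z : ℚ_[p], ‖z‖ ≤ 1 → z • v ∈ Metric.eball (0 : Fin d → ℚ_[p]) r := fun z hz =>
    Metric.eball_subset_eball (min_le_left _ _) (hzv z hz)
  have hmU : ∀ z : ℚ_[p], ‖z‖ ≤ 1 → x0 + z • v ∈ U := fun z hz => by
    refine hRU ?_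
    have := Metric.eball_subset_eball (min_le_right _ _) (hzv z hz)
    rw [Metric.eball_ofReal] at this
    simpa using this
  have hsum : ∀ z : ℚ_[p], ‖z‖ ≤ 1 → HasSum (fun k : ℕ => z ^ k • P k (fun _ => v)) (f (x0 + z • v)) := by
    intro z hz
    have := hP.hasSum (hr z hz)
    have he : (fun k : ℕ => z ^ k • P k (fun _ => v)) = fun k : ℕ => P k (fun _ => z • v) := by
      funext k
      rw [ContinuousMultilinearMap.map_smul_univ]
      simp
    rw [he]
    exact this
  have hone := oneD p (fun z => f (x0 + z • v)) ?_ (fun k => P k (fun _ => v)) ?_ ?_ (by simpa using hw)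
  · have hall : lam p (closedBall 0 1) = 0 := by
      refine measure_mono_null ?_ (measure_union_null hone (ae_iff.1 hv))
      intro z hz
      by_cases h : IsVWMA p (f (x0 + z • v))
      · exact Or.inl ⟨hz, h⟩
      · refine Or.inr ?_
        have hz' : ‖z‖ ≤ 1 := by simpa using hz
        simp only [Set.mem_ofPred_eq, not_not]
        exact subset_toMeasurable _ _ ⟨hmU z hz', h⟩
    rw [lam_unit] at hall
    exact one_ne_zero hall
  · refine (hf.continuousOn).comp (by fun_prop) ?_
    intro z hz
    exact hmU z (by simpa using hz)
  · have := (hsum 1 (by simp)).summable.tendsto_atTop_zero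
    simpa using this
  · intro x hx
    exact (hsum x hx).tendsto_sum_nat



/-- If `M ⊆ ℚ_p^n` is an analytic submanifold and some `y₀ ∈ M` is not
very well multiplicatively approximable, then the set of not VWMA points of `M` has
positive measure w.r.t. the smooth measure class on `M`. -/
theorem statement10 (p : ℕ) [Fact p.Prime] (n d : ℕ) (hn : 1 ≤ n)
    (M : Set (Fin n → ℚ_[p])) (hM : IsAnalyticSubmanifold p d n M)
    (y₀ : Fin n → ℚ_[p]) (hy₀ : y₀ ∈ M) (hw : ¬ IsVWMA p y₀) :
    ∃ (U : Set (Fin d → ℚ_[p])) (f : (Fin d → ℚ_[p]) → (Fin n → ℚ_[p])),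
      IsChart p d n M U f ∧
      ∀ (μ : Measure (Fin d → ℚ_[p])), μ.IsAddHaarMeasure →
        0 < μ {x ∈ U | ¬ IsVWMA p (f x)} := by
  obtain ⟨U, f, hch, x0, hx0, rfl⟩ := hM.2 y₀ hy₀
  exact ⟨U, f, hch, fun μ hμ => main_pos p n d U f hch.1 hch.2.1 x0 hx0 hw μ⟩

end PadicDioph
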